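/- (Lemma 2) Let μ be as in the class {μ} and let M = M_μ be the associated function. Then there exist constants c₀ ∈ ℝ and C > 0 (with C absolute, not depending on μ) such that for all sufficiently large y: |∫₀^{M(y)} |ζ(1/2+it)|² dt − F(y)| ≤ C (ln y)/y, where F(y) = (y/2) ln(y/2) + (c − ln(2π)) (y/2) + c₀ and c is the Euler–Mascheroni constant. -/

import Mathlib

open MeasureTheory Filter Real Set

/-- `Z(t)² = |ζ(1/2 + it)|²`, the square of Hardy's function. -/
noncomputable def Z2 (t : ℝ) : ℝ := ‖riemannZeta (1/2 + t * Complex.I)‖ ^ 2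


noncomputable def hlB (z : ℂ) : ℂ := (Complex.exp z - 1)⁻¹
noncomputable def hlPhi (z : ℂ) : ℂ := hlB z - z⁻¹

lemma hlB_measurable : Measurable hlB := by
  unfold hlB
  fun_prop

lemma hlPhi_measurable : Measurable hlPhi := by
  unfold hlPhi
  exact hlB_measurable.sub measurable_inv

lemma hlPhi_near {z : ℂ} (h0 : z ≠ 0) (h1 : ‖z‖ ≤ 1) : ‖hlPhi z + 1 / 2‖ ≤ 4 * ‖z‖ := by
  have hz : 0 < ‖z‖ := norm_pos_iff.mpr h0
  have e3 := Complex.exp_bound h1 (n := 3) (by norm_num)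
  have e2 := Complex.exp_bound h1 (n := 2) (by norm_num)
  simp only [Finset.sum_range_succ, Finset.sum_range_zero, Nat.factorial] at e2 e3
  norm_num at e2 e3
  set r := Complex.exp z - (1 + z + z ^ 2 / 2) with hr
  have hlow : ‖z‖ / 4 ≤ ‖Complex.exp z - 1‖ := by
    have : ‖z‖ ≤ ‖Complex.exp z - 1‖ + ‖Complex.exp z - (1 + z)‖ := by
      calc ‖z‖ = ‖(Complex.exp z - 1) - (Complex.exp z - (1 + z))‖ := by congr 1; ring
        _ ≤ _ := norm_sub_le _ _
    nlinarith
  have hne : Complex.exp z - 1 ≠ 0 := by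
    intro h
    rw [h, norm_zero] at hlow
    linarith
  have key : hlPhi z + 1 / 2 = (-r + z ^ 3 / 4 + z * r / 2) / (z * (Complex.exp z - 1)) := by
    unfold hlPhi hlB
    have : r = Complex.exp z - (1 + z + z ^ 2 / 2) := hr
    rw [this]
    field_simp
    ring
  rw [key, norm_div, norm_mul, div_le_iff₀ (by positivity)]
  have hnum : ‖-r + z ^ 3 / 4 + z * r / 2‖ ≤ ‖z‖ ^ 3 := by
    calc ‖-r + z ^ 3 / 4 + z * r / 2‖ ≤ ‖-r‖ + ‖z ^ 3 / 4‖ + ‖z * r / 2‖ := norm_add₃_le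
      _ = ‖r‖ + ‖z‖ ^ 3 / 4 + ‖z‖ * ‖r‖ / 2 := by simp
      _ ≤ _ := by
        have : ‖z‖ * ‖r‖ ≤ ‖r‖ := by nlinarith [norm_nonneg r]
        nlinarith [pow_pos hz 3]
  calc _ ≤ _ := hnum
    _ ≤ 4 * ‖z‖ * (‖z‖ * (‖z‖ / 4)) := by nlinarith
    _ ≤ _ := by gcongr

lemma hl_exp_sub_one_ne {w : ℂ} (h : 0 < w.re) : Complex.exp w - 1 ≠ 0 := by
  intro h'
  have h2 : ‖Complex.exp w‖ = 1 := by rw [sub_eq_zero.mp h']; simp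
  rw [Complex.norm_exp, Real.exp_eq_one_iff] at h2
  linarith

lemma hlB_norm {w : ℂ} (h : 0 < w.re) : ‖hlB w‖ ≤ (Real.exp w.re - 1)⁻¹ := by
  unfold hlB
  rw [norm_inv]
  have h1 : 0 < Real.exp w.re - 1 := by linarith [Real.add_one_lt_exp h.ne']
  apply inv_anti₀ h1
  have := norm_sub_norm_le (Complex.exp w) 1
  rw [Complex.norm_exp] at this
  simpa using this

lemma hlB_norm' {w : ℂ} (h : 0 < w.re) : ‖hlB w‖ ≤ (w.re)⁻¹ := by
  refine (hlB_norm h).trans (inv_anti₀ h ?_)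
  linarith [Real.add_one_lt_exp h.ne']

lemma hlB_real {z : ℝ} (hz : 0 < z) : ‖hlB z‖ * z ≤ Real.exp (-z / 2) := by
  have h := hlB_norm (w := (z : ℂ)) (by simpa using hz)
  simp only [Complex.ofReal_re] at h
  have h1 : 0 < Real.exp z - 1 := by linarith [Real.add_one_lt_exp hz.ne']
  calc ‖hlB z‖ * z ≤ (Real.exp z - 1)⁻¹ * z := by gcongr
    _ ≤ Real.exp (-z / 2) := by
      rw [inv_mul_le_iff₀ h1]
      have := Real.self_le_sinh_iff.mpr (by positivity : 0 ≤ z / 2)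
      rw [Real.sinh_eq] at this
      have e1 : Real.exp z * Real.exp (-z / 2) = Real.exp (z / 2) := by
        rw [← Real.exp_add]; congr 1; ring
      have e2 : Real.exp (-(z / 2)) = Real.exp (-z / 2) := by congr 1; ring
      rw [e2] at this
      nlinarith

lemma hlB_eq {z : ℂ} : hlB z = hlPhi z + z⁻¹ := by unfold hlPhi; ring

lemma hlPhi_norm_real {z : ℝ} (hz : 0 < z) : ‖hlPhi z‖ ≤ z⁻¹ := by
  have h1 : 0 < Real.exp z - 1 := by linarith [Real.add_one_lt_exp hz.ne']
  have h2 : (Real.exp z - 1)⁻¹ ≤ z⁻¹ := inv_anti₀ hz (by linarith [Real.add_one_lt_exp hz.ne'])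
  have : hlPhi z = (((Real.exp z - 1)⁻¹ - z⁻¹ : ℝ) : ℂ) := by
    unfold hlPhi hlB; push_cast; rfl
  rw [this, Complex.norm_real, Real.norm_eq_abs, abs_le]
  have := inv_pos.mpr h1
  constructor <;> linarith [inv_pos.mpr hz]

lemma hlPhi_bound {z : ℝ} (hz : 0 < z) : ‖hlPhi z‖ ≤ 9 / (1 + z) := by
  rw [le_div_iff₀ (by positivity)]
  rcases le_total z 1 with h | h
  · have := hlPhi_near (z := (z : ℂ)) (by exact_mod_cast hz.ne') (by simpa [abs_of_pos hz] using h)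
    have h2 : ‖hlPhi z‖ ≤ ‖hlPhi z + 1 / 2‖ + ‖(1 / 2 : ℂ)‖ := by
      simpa using norm_sub_le (hlPhi z + 1 / 2) (1 / 2)
    have h3 : ‖(z : ℂ)‖ = z := by simp [abs_of_pos hz]
    norm_num at h2 this h3
    nlinarith [norm_nonneg (hlPhi z), abs_of_pos hz]
  · have := hlPhi_norm_real hz
    calc ‖hlPhi z‖ * (1 + z) ≤ z⁻¹ * (z + z) := by gcongr
      _ = 2 := by field_simp; norm_num
      _ ≤ 9 := by norm_num

/-- `φ(z)+1/2` for `z` with positive real part, along rays. -/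
lemma hlPhi_ray {p : ℂ} (hp : 0 < p.re) {z : ℝ} (hz : 0 < z) :
    ‖hlPhi (p * z) + 1 / 2‖ ≤ (4 + 2 / p.re * ‖p‖) * ‖p‖ * z := by
  have hpn : p.re ≤ ‖p‖ := Complex.re_le_norm p
  have hp0 : 0 < ‖p‖ := hp.trans_le hpn
  have hn : ‖p * z‖ = ‖p‖ * z := by simp [abs_of_pos hz]
  have hne : p * z ≠ 0 := by
    rw [← norm_pos_iff, hn]; positivity
  rcases le_total (‖p‖ * z) 1 with h | h
  · have := hlPhi_near hne (by rwa [hn])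
    rw [hn] at this
    refine this.trans ?_
    have : 0 ≤ 2 / p.re * ‖p‖ * (‖p‖ * z) := by positivity
    nlinarith
  · have hre : (p * z).re = p.re * z := by simp
    have h1 : ‖hlB (p * z)‖ ≤ (p.re * z)⁻¹ := by
      rw [← hre]; exact hlB_norm' (by rw [hre]; positivity)
    have h2 : ‖(p * z)⁻¹‖ ≤ (p.re * z)⁻¹ := by
      rw [norm_inv, hn]; gcongr
    have h3 : ‖hlPhi (p * z) + 1 / 2‖ ≤ 2 * (p.re * z)⁻¹ + 1 / 2 := by
      unfold hlPhi
      calc _ ≤ ‖hlB (p * z)‖ + ‖(p * z)⁻¹‖ + ‖(1 / 2 : ℂ)‖ :=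
            (norm_add_le _ _).trans (add_le_add (norm_sub_le _ _) le_rfl)
        _ ≤ _ := by
          have h5 : ‖(1 / 2 : ℂ)‖ = 1 / 2 := by norm_num
          rw [h5]; linarith
    refine h3.trans ?_
    have h4 : (p.re * z)⁻¹ ≤ 1 / p.re * ‖p‖ * (‖p‖ * z) := by
      rw [mul_inv, one_div, mul_assoc]
      gcongr
      calc z⁻¹ ≤ ‖p‖ := by rw [inv_le_iff_one_le_mul₀ hz]; linarith
        _ ≤ ‖p‖ * (‖p‖ * z) := by nlinarith
    have : 2 / p.re * ‖p‖ * (‖p‖ * z) = 2 * (1 / p.re * ‖p‖ * (‖p‖ * z)) := by ring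
    nlinarith

lemma hl_mellin_B {s : ℂ} (hs : 1 < s.re) :
    mellin (fun t : ℝ => hlB t) s = Complex.Gamma s * riemannZeta s := by
  have hS : Summable fun i : ℕ => ‖(1 : ℂ)‖ / ((i : ℝ) + 1) ^ s.re := by
    have := (summable_nat_add_iff 1).mpr (Real.summable_one_div_nat_rpow.mpr hs)
    simpa using this
  have h := hasSum_mellin (a := fun _ : ℕ => (1 : ℂ)) (p := fun i : ℕ => (i : ℝ) + 1)
    (F := fun t : ℝ => hlB t) (s := s) (fun i => Or.inr (by positivity)) (by linarith) ?_ hS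
  · rw [← h.tsum_eq, zeta_eq_tsum_one_div_nat_add_one_cpow hs, ← tsum_mul_left]
    congr 1; ext n
    push_cast
    ring
  · intro t ht
    have ht : 0 < t := ht
    have h1 : Real.exp (-t) < 1 := by simpa using ht
    have h2 := (hasSum_geometric_of_lt_one (Real.exp_pos (-t)).le h1).mul_left (Real.exp (-t))
    have h3 : Real.exp (-t) * (1 - Real.exp (-t))⁻¹ = (Real.exp t - 1)⁻¹ := by
      rw [Real.exp_neg]
      have := Real.exp_pos t
      have h4 : Real.exp t - 1 ≠ 0 := by
        have := Real.add_one_lt_exp ht.ne'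
        intro h; linarith
      field_simp
    rw [h3] at h2
    have h5 : hlB t = (((Real.exp t - 1)⁻¹ : ℝ) : ℂ) := by unfold hlB; push_cast; rfl
    rw [h5]
    convert Complex.hasSum_ofReal.mpr h2 using 1
    ext i
    rw [← Real.exp_nat_mul, ← Real.exp_add, one_mul]
    congr 2; ring

lemma hlB_continuousOn : ContinuousOn (fun t : ℝ => hlB t) (Ioi 0) := by
  unfold hlB
  apply ContinuousOn.inv₀ (by fun_prop)
  intro t ht
  exact hl_exp_sub_one_ne (by simpa using ht)

lemma hlPhi_continuousOn : ContinuousOn (fun t : ℝ => hlPhi t) (Ioi 0) := by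
  unfold hlPhi
  apply hlB_continuousOn.sub
  apply ContinuousOn.inv₀ (by fun_prop)
  intro t ht
  exact_mod_cast (ne_of_gt ht)

noncomputable def hlPsi (t : ℝ) : ℂ := hlB t - indicator (Ioc (0 : ℝ) 1) (fun t : ℝ => (t : ℂ) ^ (-1 : ℂ)) t

lemma hlB_top : (fun t : ℝ => hlB t) =O[atTop] (fun t : ℝ => Real.exp (-(1 / 2) * t)) := by
  apply Asymptotics.IsBigO.of_bound 1
  filter_upwards [eventually_ge_atTop 1] with t ht
  have := hlB_real (z := t) (by linarith)
  rw [Real.norm_eq_abs, abs_of_pos (Real.exp_pos _), one_mul]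
  have h2 : Real.exp (-t / 2) = Real.exp (-(1 / 2) * t) := by congr 1; ring
  rw [← h2]
  refine le_trans ?_ this
  exact le_mul_of_one_le_right (norm_nonneg _) ht

lemma hlB_bot : (fun t : ℝ => hlB t) =O[nhdsWithin 0 (Ioi 0)] (fun t : ℝ => t ^ (-(1:ℝ))) := by
  apply Asymptotics.IsBigO.of_bound 1
  filter_upwards [self_mem_nhdsWithin] with t ht
  have ht : 0 < t := ht
  rw [Real.rpow_neg_one, norm_inv, Real.norm_eq_abs, abs_of_pos ht, one_mul]
  simpa using hlB_norm' (w := (t : ℂ)) (by simpa using ht)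

lemma hlB_li : LocallyIntegrableOn (fun t : ℝ => hlB t) (Ioi 0) :=
  hlB_continuousOn.locallyIntegrableOn measurableSet_Ioi

lemma hlB_mellinConvergent {s : ℂ} (hs : 1 < s.re) : MellinConvergent (fun t : ℝ => hlB t) s :=
  mellinConvergent_of_isBigO_rpow hlB_li
    (hlB_top.trans (isLittleO_exp_neg_mul_rpow_atTop (by norm_num) (-(s.re + 1))).isBigO)
    (by linarith) hlB_bot hs

lemma hlPsi_li : LocallyIntegrableOn hlPsi (Ioi 0) := by
  unfold hlPsi
  apply hlB_li.sub
  have : LocallyIntegrableOn (fun t : ℝ => (t : ℂ) ^ (-1 : ℂ)) (Ioi 0) := by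
    apply ContinuousOn.locallyIntegrableOn _ measurableSet_Ioi
    intro t ht
    apply ContinuousAt.continuousWithinAt
    apply ContinuousAt.comp (g := fun z : ℂ => z ^ (-1 : ℂ)) (f := fun t : ℝ => (t : ℂ))
    · exact continuousAt_cpow_const (by simp [Complex.slitPlane, mem_Ioi.mp ht])
    · fun_prop
  intro x hx
  obtain ⟨U, hU, h⟩ := this x hx
  exact ⟨U, hU, h.indicator measurableSet_Ioc⟩

lemma hlPsi_top (a : ℝ) : hlPsi =O[atTop] (fun t : ℝ => t ^ (-a)) := by
  have h := hlB_top.trans (isLittleO_exp_neg_mul_rpow_atTop (by norm_num : (0:ℝ) < 1 / 2) (-a)).isBigO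
  refine h.congr' ?_ EventuallyEq.rfl
  filter_upwards [eventually_gt_atTop 1] with t ht
  simp [hlPsi, not_le.mpr ht]

lemma hlPsi_bot : hlPsi =O[nhdsWithin 0 (Ioi 0)] (fun t : ℝ => t ^ (-(0:ℝ))) := by
  apply Asymptotics.IsBigO.of_bound 9
  filter_upwards [Ioc_mem_nhdsGT (zero_lt_one' ℝ)] with t ht
  have h2 : hlPsi t = hlPhi t := by
    simp only [hlPsi, hlPhi, indicator_of_mem ht, Complex.cpow_neg_one]
  rw [h2]
  have := hlPhi_bound ht.1
  simp only [neg_zero, Real.rpow_zero, norm_one, mul_one]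
  refine this.trans ?_
  rw [div_le_iff₀ (by linarith [ht.1])]
  linarith [ht.1]

lemma hlPsi_mc {s : ℂ} (hs : 0 < s.re) : MellinConvergent hlPsi s :=
  mellinConvergent_of_isBigO_rpow hlPsi_li (hlPsi_top (s.re + 1)) (by linarith) hlPsi_bot hs

lemma hlPsi_diff {s : ℂ} (hs : 0 < s.re) : DifferentiableAt ℂ (mellin hlPsi) s :=
  mellin_differentiableAt_of_isBigO_rpow hlPsi_li (hlPsi_top (s.re + 1)) (by linarith) hlPsi_bot hs

lemma hl_identity {f g : ℂ → ℂ} (hf : ∀ s : ℂ, 0 < s.re → DifferentiableAt ℂ f s)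
    (hg : ∀ s : ℂ, 0 < s.re → DifferentiableAt ℂ g s)
    (h : ∀ s : ℂ, 1 < s.re → f s = g s) {s : ℂ} (hs : 0 < s.re) : f s = g s := by
  have ho : IsOpen {s : ℂ | 0 < s.re} := isOpen_lt continuous_const Complex.continuous_re
  have hf' : AnalyticOnNhd ℂ f {s : ℂ | 0 < s.re} :=
    DifferentiableOn.analyticOnNhd (fun s hs => (hf s hs).differentiableWithinAt) ho
  have hg' : AnalyticOnNhd ℂ g {s : ℂ | 0 < s.re} :=
    DifferentiableOn.analyticOnNhd (fun s hs => (hg s hs).differentiableWithinAt) ho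
  refine hf'.eqOn_of_preconnected_of_eventuallyEq hg' (convex_halfSpace_re_gt 0).isPreconnected
    (z₀ := 2) (by simp) ?_ hs
  have ho2 : IsOpen {s : ℂ | 1 < s.re} := isOpen_lt continuous_const Complex.continuous_re
  filter_upwards [ho2.mem_nhds (by simp : (2:ℂ) ∈ {s : ℂ | 1 < s.re})] with s hs
  exact h s hs

lemma hl_zeta1 {s : ℂ} (hs : s ≠ 1) : riemannZeta₁ s = (s - 1) * riemannZeta s := by
  rw [riemannZeta_eq_inv_sub_mul hs, mul_inv_cancel_left₀ (sub_ne_zero.mpr hs)]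

lemma hlPsi_mellin {s : ℂ} (hs : 0 < s.re) :
    (s - 1) * mellin hlPsi s = Complex.Gamma s * riemannZeta₁ s - 1 := by
  refine hl_identity (f := fun s => (s - 1) * mellin hlPsi s)
    (g := fun s => Complex.Gamma s * riemannZeta₁ s - 1) ?_ ?_ ?_ hs
  · intro s hs
    exact (by fun_prop : DifferentiableAt ℂ (fun s : ℂ => s - 1) s).mul (hlPsi_diff hs)
  · intro s hs
    have : DifferentiableAt ℂ Complex.Gamma s := by
      apply Complex.differentiableAt_Gamma
      intro m h
      rw [h] at hs
      simp at hs
      linarith [(Nat.cast_nonneg m : (0:ℝ) ≤ m)]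
    exact (this.mul differentiable_riemannZeta₁.differentiableAt).sub_const 1
  · intro s hs
    have h1 : s ≠ 1 := by intro h; rw [h] at hs; simp at hs
    have h2 := hasMellin_cpow_Ioc (-1) (s := s) (by simp; linarith)
    have h3 := (hasMellin_sub (hlB_mellinConvergent hs) h2.1).2
    have h4 : mellin hlPsi s = mellin (fun t : ℝ => hlB t) s - 1 / (s + -1) := by
      rw [← h2.2, ← h3]; rfl
    have h5 : s + -1 = s - 1 := by ring
    have h6 := sub_ne_zero.mpr h1
    rw [h4, hl_mellin_B hs, hl_zeta1 h1, h5]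
    field_simp

lemma hlPhi_mc {s : ℂ} (hs : 0 < s.re) (hs1 : s.re < 1) :
    MellinConvergent (fun t : ℝ => hlPhi t) s := by
  refine mellinConvergent_of_isBigO_rpow (a := 1) (b := 0)
    (hlPhi_continuousOn.locallyIntegrableOn measurableSet_Ioi) ?_ hs1 ?_ hs
  · apply Asymptotics.IsBigO.of_bound 1
    filter_upwards [eventually_gt_atTop 0] with t ht
    rw [Real.rpow_neg_one, norm_inv, Real.norm_eq_abs, abs_of_pos ht, one_mul]
    exact hlPhi_norm_real ht
  · apply Asymptotics.IsBigO.of_bound 9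
    filter_upwards [Ioc_mem_nhdsGT (zero_lt_one' ℝ)] with t ht
    have := hlPhi_bound ht.1
    simp only [neg_zero, Real.rpow_zero, norm_one, mul_one]
    refine this.trans ?_
    rw [div_le_iff₀ (by linarith [ht.1])]
    linarith [ht.1]

lemma hlPhi_mellin {s : ℂ} (hs : 0 < s.re) (hs1 : s.re < 1) :
    mellin (fun t : ℝ => hlPhi t) s = Complex.Gamma s * riemannZeta s := by
  have h1 : s ≠ 1 := by intro h; rw [h] at hs1; simp at hs1
  have h6 := sub_ne_zero.mpr h1
  have e1 : mellin hlPsi s = Complex.Gamma s * riemannZeta s - 1 / (s - 1) := by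
    have := hlPsi_mellin hs
    rw [hl_zeta1 h1] at this
    apply mul_left_cancel₀ h6
    rw [this]
    field_simp
  have e2 : mellin (fun t : ℝ => hlPhi t - hlPsi t) s = 1 / (s - 1) := by
    unfold mellin
    have : ∀ t ∈ Ioi (0:ℝ), (t : ℂ) ^ (s - 1) • (hlPhi t - hlPsi t)
        = indicator (Ioi (1:ℝ)) (fun t : ℝ => -(t : ℂ) ^ (s - 2)) t := by
      intro t ht
      have ht : 0 < t := ht
      by_cases h : t ≤ 1
      · simp [hlPsi, hlPhi, ht, h, Complex.cpow_neg_one]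
      · have h' : 1 < t := not_le.mp h
        have h8 : (t : ℂ) ^ (s - 1) = (t : ℂ) ^ (s - 2) * t := by
          rw [show s - 1 = (s - 2) + 1 by ring, Complex.cpow_add _ _ (by exact_mod_cast ht.ne'),
            Complex.cpow_one]
        have h9 : (t : ℂ) ≠ 0 := by exact_mod_cast ht.ne'
        simp only [hlPsi, hlPhi, mem_Ioc, h, and_false, not_false_eq_true, indicator_of_notMem,
          mem_Ioi, h', indicator_of_mem, smul_eq_mul, h8]
        field_simp
        ring
    rw [setIntegral_congr_fun measurableSet_Ioi this, setIntegral_indicator measurableSet_Ioi,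
      inter_eq_right.mpr (Ioi_subset_Ioi zero_le_one), integral_neg,
      integral_Ioi_cpow_of_lt (by simp; linarith) zero_lt_one]
    simp only [Complex.ofReal_one, Complex.one_cpow]
    rw [show s - 2 + 1 = s - 1 by ring]
    ring
  have e3 := (hasMellin_sub (hlPhi_mc hs hs1) (hlPsi_mc hs)).2
  rw [e2, e1] at e3
  linear_combination -e3

/-- Abel summation. -/
lemma hl_zeta_fract {s : ℂ} (hs : 0 < s.re) :
    riemannZeta₁ s = s - s * (s - 1) *
      mellin (indicator (Ioi (1:ℝ)) (fun t : ℝ => ((Int.fract t : ℝ) : ℂ))) (-s) := by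
  refine hl_identity (f := riemannZeta₁) (g := fun s => s - s * (s - 1) *
      mellin (indicator (Ioi (1:ℝ)) (fun t : ℝ => ((Int.fract t : ℝ) : ℂ))) (-s)) ?_ ?_ ?_ hs
  · intro s _
    exact differentiable_riemannZeta₁.differentiableAt
  · intro s hs
    have : DifferentiableAt ℂ
        (mellin (indicator (Ioi (1:ℝ)) (fun t : ℝ => ((Int.fract t : ℝ) : ℂ)))) (-s) := by
      refine mellin_differentiableAt_of_isBigO_rpow (a := 0) (b := -s.re - 1) ?_ ?_ (by simpa using hs)
        ?_ (by simp)
      · apply LocallyIntegrable.locallyIntegrableOn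
        apply LocallyIntegrable.indicator _ measurableSet_Ioi
        have hb : LocallyIntegrable (fun _ : ℝ => (1:ℝ)) := locallyIntegrable_const _
        refine hb.mono ?_ ?_
        · exact (Complex.measurable_ofReal.comp measurable_fract).aestronglyMeasurable
        · filter_upwards with t
          simp [abs_of_nonneg (Int.fract_nonneg t), (Int.fract_lt_one t).le]
      · apply Asymptotics.IsBigO.of_bound 1
        filter_upwards [eventually_gt_atTop 1] with t ht
        simp [ht, abs_of_nonneg (Int.fract_nonneg t), (Int.fract_lt_one t).le]
      · apply Asymptotics.IsBigO.of_bound 1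
        filter_upwards [Ioc_mem_nhdsGT (zero_lt_one' ℝ)] with t ht
        simp [ht.2]
    have h2 : DifferentiableAt ℂ (fun s => mellin (indicator (Ioi (1:ℝ))
        (fun t : ℝ => ((Int.fract t : ℝ) : ℂ))) (-s)) s :=
      this.comp s (by fun_prop)
    fun_prop
  · intro s hs
    have h1 : s ≠ 1 := by intro h; rw [h] at hs; simp at hs
    have h6 := sub_ne_zero.mpr h1
    have hL := LSeries_eq_mul_integral' (1 : ℕ → ℂ) (r := 1) zero_le_one (s := s) hs (by
      apply Asymptotics.IsBigO.of_bound 1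
      filter_upwards with n
      simp)
    rw [LSeries_one_eq_riemannZeta hs] at hL
    have hI : ∫ t in Ioi (1:ℝ), (∑ k ∈ Finset.Icc 1 ⌊t⌋₊, (1 : ℕ → ℂ) k) * (t:ℂ) ^ (-(s + 1))
        = 1 / (s - 1) - mellin (indicator (Ioi (1:ℝ)) (fun t : ℝ => ((Int.fract t : ℝ) : ℂ))) (-s) := by
      have m1 : mellin (indicator (Ioi (1:ℝ)) (fun t : ℝ => ((Int.fract t : ℝ) : ℂ))) (-s)
          = ∫ t in Ioi (1:ℝ), (t:ℂ) ^ (-s - 1) * ((Int.fract t : ℝ) : ℂ) := by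
        unfold mellin
        have : ∀ t ∈ Ioi (0:ℝ), (t : ℂ) ^ (-s - 1) • (indicator (Ioi (1:ℝ)) (fun t : ℝ => ((Int.fract t : ℝ) : ℂ))) t
          = indicator (Ioi (1:ℝ)) (fun t : ℝ => (t:ℂ) ^ (-s - 1) * ((Int.fract t : ℝ) : ℂ)) t := by
          intro t ht
          by_cases h : 1 < t <;> simp [h]
        rw [setIntegral_congr_fun measurableSet_Ioi this, setIntegral_indicator measurableSet_Ioi,
          inter_eq_right.mpr (Ioi_subset_Ioi zero_le_one)]
      have m2 : (1:ℂ) / (s - 1) = ∫ t in Ioi (1:ℝ), (t:ℂ) ^ (-s) := by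
        rw [integral_Ioi_cpow_of_lt (by simpa using hs) zero_lt_one]
        simp only [Complex.ofReal_one, Complex.one_cpow]
        rw [show -s + 1 = -(s - 1) by ring, neg_div_neg_eq]
      rw [m1, m2, ← integral_sub]
      · apply setIntegral_congr_fun measurableSet_Ioi
        intro t ht
        have ht : 1 < t := ht
        have h9 : (t : ℂ) ≠ 0 := by exact_mod_cast (by linarith : (t:ℝ) ≠ 0)
        have h10 : (t:ℂ) ^ (-s) = (t:ℂ) ^ (-s - 1) * t := by
          rw [show -s = (-s - 1) + 1 by ring, Complex.cpow_add _ _ h9, Complex.cpow_one]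
          congr 2; ring
        have h11 : ((⌊t⌋₊ : ℕ) : ℂ) = t - ((Int.fract t : ℝ) : ℂ) := by
          have h12 : ((⌊t⌋₊ : ℕ) : ℝ) = t - Int.fract t := by
            rw [natCast_floor_eq_intCast_floor (by linarith)]
            exact (Int.self_sub_fract t).symm
          rw [← Complex.ofReal_natCast, h12]; push_cast; ring
        simp only [Pi.one_apply, Finset.sum_const, Nat.card_Icc, nsmul_eq_mul, mul_one,
          Nat.add_sub_cancel]
        rw [h11, h10, show -(s + 1) = -s - 1 by ring]
        ring
      · exact integrableOn_Ioi_cpow_of_lt (by simpa using hs) zero_lt_one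
      · have := integrableOn_Ioi_cpow_of_lt (a := -s - 1) (by simp; linarith) zero_lt_one
        refine Integrable.mono this ?_ ?_
        · exact this.aestronglyMeasurable.mul
            (Complex.measurable_ofReal.comp measurable_fract).aestronglyMeasurable
        · filter_upwards with t
          simp only [norm_mul, Complex.norm_real, Real.norm_eq_abs, abs_of_nonneg (Int.fract_nonneg t)]
          exact mul_le_of_le_one_right (norm_nonneg _) (Int.fract_lt_one t).le
    rw [hI] at hL
    rw [hl_zeta1 h1, hL]
    field_simp

lemma hl_zeta_bound (t : ℝ) : ‖riemannZeta (1/2 + t * Complex.I)‖ ≤ 2 + 2 * |t| := by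
  set s : ℂ := 1/2 + t * Complex.I with hs
  have hre : s.re = 1/2 := by simp [hs]
  have h := hl_zeta_fract (s := s) (by rw [hre]; norm_num)
  have h1 : s ≠ 1 := by intro h; rw [h] at hre; norm_num at hre
  have h6 := sub_ne_zero.mpr h1
  set T := mellin (indicator (Ioi (1:ℝ)) (fun t : ℝ => ((Int.fract t : ℝ) : ℂ))) (-s) with hT
  have hz : riemannZeta s = s / (s - 1) - s * T := by
    rw [hl_zeta1 h1] at h
    field_simp
    linear_combination h
  have hTn : ‖T‖ ≤ 2 := by
    have m1 : T = ∫ t in Ioi (1:ℝ), (t:ℂ) ^ (-s - 1) * ((Int.fract t : ℝ) : ℂ) := by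
      rw [hT]
      unfold mellin
      have : ∀ t ∈ Ioi (0:ℝ), (t : ℂ) ^ (-s - 1) • (indicator (Ioi (1:ℝ)) (fun t : ℝ => ((Int.fract t : ℝ) : ℂ))) t
        = indicator (Ioi (1:ℝ)) (fun t : ℝ => (t:ℂ) ^ (-s - 1) * ((Int.fract t : ℝ) : ℂ)) t := by
        intro t ht
        by_cases h : 1 < t <;> simp [h]
      rw [setIntegral_congr_fun measurableSet_Ioi this, setIntegral_indicator measurableSet_Ioi,
        inter_eq_right.mpr (Ioi_subset_Ioi zero_le_one)]
    rw [m1]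
    have h2 : ∫ t in Ioi (1:ℝ), t ^ (-(3/2) : ℝ) = 2 := by
      rw [integral_Ioi_rpow_of_lt (by norm_num) zero_lt_one]
      norm_num
    rw [← h2]
    apply norm_integral_le_of_norm_le (integrableOn_Ioi_rpow_of_lt (by norm_num) zero_lt_one)
    filter_upwards [ae_restrict_mem measurableSet_Ioi] with t ht
    have ht : 1 < t := ht
    rw [norm_mul, Complex.norm_cpow_eq_rpow_re_of_pos (by linarith), Complex.norm_real,
      Real.norm_eq_abs, abs_of_nonneg (Int.fract_nonneg t)]
    have : (-s - 1).re = -(3/2) := by simp [hre]; norm_num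
    rw [this]
    exact mul_le_of_le_one_right (by positivity) (Int.fract_lt_one t).le
  have hsn : ‖s‖ ≤ 1/2 + |t| := by
    rw [hs]
    refine (norm_add_le _ _).trans ?_
    simp
  have hq : ‖s / (s - 1)‖ = 1 := by
    have : s - 1 = -(starRingEnd ℂ) s := by
      rw [hs]; apply Complex.ext <;> norm_num
    rw [this, norm_div, norm_neg, Complex.norm_conj, div_self]
    rw [norm_ne_zero_iff]
    intro h; rw [h] at hre; norm_num at hre
  rw [hz]
  calc _ ≤ ‖s / (s - 1)‖ + ‖s * T‖ := norm_sub_le _ _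
    _ ≤ 1 + (1/2 + |t|) * 2 := by rw [hq, norm_mul]; gcongr
    _ = _ := by ring



lemma Z2_nonneg (t : ℝ) : 0 ≤ Z2 t := by unfold Z2; positivity

lemma Z2_bound (t : ℝ) : Z2 t ≤ 4 * (1 + |t|) ^ 2 := by
  unfold Z2
  have := hl_zeta_bound t
  calc _ ≤ (2 + 2 * |t|) ^ 2 := by gcongr
    _ = _ := by ring

lemma hl_half_ne (t : ℝ) : (1/2 + t * Complex.I : ℂ) ≠ 1 := by
  intro h
  have := congrArg Complex.re h
  norm_num at this

lemma Z2_continuous : Continuous Z2 := by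
  unfold Z2
  apply Continuous.pow
  apply Continuous.norm
  rw [continuous_iff_continuousAt]
  intro t
  apply ContinuousAt.comp (g := riemannZeta) (f := fun t : ℝ => (1/2 + t * Complex.I : ℂ))
  · exact (differentiableAt_riemannZeta (hl_half_ne t)).continuousAt
  · fun_prop

lemma hl_conj_half (t : ℝ) : (starRingEnd ℂ) (1/2 + t * Complex.I : ℂ) = 1 - (1/2 + t * Complex.I) := by
  apply Complex.ext <;> norm_num

lemma Z2_even (t : ℝ) : Z2 (-t) = Z2 t := by
  unfold Z2
  have : (1/2 + ((-t : ℝ) : ℂ) * Complex.I : ℂ) = (starRingEnd ℂ) (1/2 + t * Complex.I : ℂ) := by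
    apply Complex.ext <;> norm_num
  rw [this, riemannZeta_conj, Complex.norm_conj]

lemma hl_poly_exp {c : ℝ} (hc : 0 < c) {u : ℝ} (hu : 0 ≤ u) :
    (1 + u) ^ 2 * Real.exp (-c * u) ≤ 24 * Real.exp c / c ^ 4 * (1 + u ^ 2)⁻¹ := by
  have h := Real.pow_div_factorial_le_exp (c * (1 + u)) (by positivity) 4
  norm_num [Nat.factorial] at h
  have e1 : Real.exp (c * (1 + u)) = Real.exp c * Real.exp (c * u) := by
    rw [← Real.exp_add]; congr 1; ring
  have e2 : Real.exp (-c * u) * Real.exp (c * u) = 1 := by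
    rw [← Real.exp_add]; simp
  rw [e1, mul_pow] at h
  rw [← div_eq_mul_inv, le_div_iff₀ (by positivity), le_div_iff₀ (by positivity)]
  have hE := Real.exp_pos (-c * u)
  have h3 : (1 + u) ^ 2 * (1 + u ^ 2) ≤ (1 + u) ^ 4 := by nlinarith [sq_nonneg (1+u)]
  calc (1 + u) ^ 2 * Real.exp (-c * u) * (1 + u ^ 2) * c ^ 4
      = ((1 + u) ^ 2 * (1 + u ^ 2)) * (Real.exp (-c * u) * c ^ 4) := by ring
    _ ≤ (1 + u) ^ 4 * (Real.exp (-c * u) * c ^ 4) := by gcongr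
    _ = 24 * (c ^ 4 * (1 + u) ^ 4 / 24) * Real.exp (-c * u) := by ring
    _ ≤ 24 * (Real.exp c * Real.exp (c * u)) * Real.exp (-c * u) := by gcongr
    _ = 24 * Real.exp c * (Real.exp (-c * u) * Real.exp (c * u)) := by ring
    _ = _ := by rw [e2, mul_one]

lemma hl_poly_exp_integrable {c : ℝ} (hc : 0 < c) :
    Integrable (fun t : ℝ => (1 + |t|) ^ 2 * Real.exp (-c * |t|)) := by
  refine Integrable.mono' (integrable_inv_one_add_sq.const_mul (24 * Real.exp c / c ^ 4)) ?_ ?_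
  · exact (by fun_prop : Continuous _).aestronglyMeasurable
  · filter_upwards with t
    rw [Real.norm_eq_abs, abs_of_nonneg (by positivity)]
    simpa using hl_poly_exp hc (abs_nonneg t)

lemma hl_cosh_ge (t : ℝ) : Real.exp (π * |t|) ≤ 2 * Real.cosh (π * t) := by
  rw [← Real.cosh_abs, abs_mul, abs_of_pos Real.pi_pos, Real.cosh_eq]
  linarith [Real.exp_pos (-(π * |t|))]

noncomputable def hlW (t : ℝ) : ℝ := Z2 t / (2 * Real.cosh (π * t))

lemma hlW_nonneg (t : ℝ) : 0 ≤ hlW t := by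
  unfold hlW
  have := Real.cosh_pos (π * t)
  have := Z2_nonneg t
  positivity

lemma hlW_bound (t : ℝ) : hlW t ≤ 4 * ((1 + |t|) ^ 2 * Real.exp (-π * |t|)) := by
  unfold hlW
  rw [div_le_iff₀ (by have := Real.cosh_pos (π * t); positivity)]
  have h1 := hl_cosh_ge t
  have e2 : Real.exp (-π * |t|) * Real.exp (π * |t|) = 1 := by
    rw [← Real.exp_add]; simp
  calc Z2 t ≤ 4 * (1 + |t|) ^ 2 := Z2_bound t
    _ = 4 * ((1 + |t|) ^ 2 * (Real.exp (-π * |t|))) * Real.exp (π * |t|) := by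
      rw [mul_assoc, mul_assoc, e2, mul_one]
    _ ≤ _ := by gcongr

lemma hlW_continuous : Continuous hlW := by
  unfold hlW
  apply Z2_continuous.div (by fun_prop)
  intro t
  have := Real.cosh_pos (π * t)
  positivity

lemma hlW_integrable : Integrable hlW := by
  refine Integrable.mono' ((hl_poly_exp_integrable Real.pi_pos).const_mul 4)
    hlW_continuous.aestronglyMeasurable ?_
  filter_upwards with t
  rw [Real.norm_eq_abs, abs_of_nonneg (hlW_nonneg t)]
  exact hlW_bound t

noncomputable def hlC (x : ℝ) : ℂ := ∫ v in Ioi (0:ℝ), hlPhi v * hlPhi ((x * v : ℝ) : ℂ)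

lemma hlC_integrand_bound {a x v : ℝ} (ha : 0 < a) (ha1 : a ≤ 1) (hx : a ≤ x) (hv : 0 < v) :
    ‖hlPhi v * hlPhi ((x * v : ℝ) : ℂ)‖ ≤ 81 / a * (1 + v ^ 2)⁻¹ := by
  rw [norm_mul]
  have h1 := hlPhi_bound hv
  have hx0 : 0 < x := ha.trans_le hx
  have h2 := hlPhi_bound (z := x * v) (by positivity)
  calc _ ≤ 9 / (1 + v) * (9 / (1 + x * v)) := by gcongr
    _ = 81 / ((1 + v) * (1 + x * v)) := by field_simp; norm_num
    _ ≤ 81 / (a * (1 + v ^ 2)) := by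
      gcongr 81 / ?_
      have : a * v ≤ x * v := by gcongr
      have h3 : a * (1 + v) ≤ 1 + x * v := by nlinarith
      nlinarith [mul_le_mul_of_nonneg_left h3 (by linarith : 0 ≤ 1 + v), mul_pos ha hv]
    _ = _ := by field_simp

lemma hlC_meas (x : ℝ) : Measurable (fun v : ℝ => hlPhi v * hlPhi ((x * v : ℝ) : ℂ)) := by
  exact (hlPhi_measurable.comp (by fun_prop)).mul (hlPhi_measurable.comp (by fun_prop))

lemma hlC_integrable {x : ℝ} (hx : 0 < x) :
    IntegrableOn (fun v : ℝ => hlPhi v * hlPhi ((x * v : ℝ) : ℂ)) (Ioi 0) := by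
  refine Integrable.mono' (integrable_inv_one_add_sq.const_mul (81 / (min x 1))).integrableOn
    (hlC_meas x).aestronglyMeasurable ?_
  filter_upwards [ae_restrict_mem measurableSet_Ioi] with v hv
  exact hlC_integrand_bound (lt_min hx one_pos) (min_le_right _ _) (min_le_left _ _) hv

lemma hlC_continuousAt {x : ℝ} (hx : 0 < x) : ContinuousAt hlC x := by
  unfold hlC
  have ha : 0 < min (x / 2) 1 := lt_min (by linarith) one_pos
  refine continuousAt_of_dominated (bound := fun v => 81 / (min (x / 2) 1) * (1 + v ^ 2)⁻¹) ?_ ?_ ?_ ?_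
  · filter_upwards with y
    exact (hlC_meas y).aestronglyMeasurable
  · filter_upwards [lt_mem_nhds (by linarith : x / 2 < x)] with y hy
    filter_upwards [ae_restrict_mem measurableSet_Ioi] with v hv
    exact hlC_integrand_bound ha (min_le_right _ _) ((min_le_left _ _).trans hy.le) hv
  · exact (integrable_inv_one_add_sq.const_mul _).integrableOn
  · filter_upwards [ae_restrict_mem measurableSet_Ioi] with v hv
    have hv : 0 < v := hv
    apply ContinuousAt.mul continuousAt_const
    apply ContinuousAt.comp (g := fun t : ℝ => hlPhi t) (f := fun y : ℝ => y * v)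
    · exact hlPhi_continuousOn.continuousAt (Ioi_mem_nhds (by positivity))
    · fun_prop

lemma hlC_prod_integrable {s : ℂ} (hs : s.re = 1/2) :
    Integrable (fun q : ℝ × ℝ => (q.1 : ℂ) ^ (s - 1) * (hlPhi q.2 * hlPhi ((q.1 * q.2 : ℝ) : ℂ)))
      ((volume.restrict (Ioi (0:ℝ))).prod (volume.restrict (Ioi (0:ℝ)))) := by
  have hmc : MellinConvergent (fun t : ℝ => hlPhi t) s := hlPhi_mc (by rw [hs]; norm_num) (by rw [hs]; norm_num)
  rw [integrable_prod_iff']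
  · constructor
    · filter_upwards [ae_restrict_mem measurableSet_Ioi] with v hv
      have hv : 0 < v := hv
      have h1 : MellinConvergent (fun t : ℝ => hlPhi ((v * t : ℝ) : ℂ)) s :=
        (MellinConvergent.comp_mul_left (f := fun t : ℝ => hlPhi t) hv).mpr hmc
      have h2 := Integrable.const_mul h1 (hlPhi v)
      refine h2.congr ?_
      filter_upwards with x
      rw [mul_comm v x, smul_eq_mul]
      ring
    · have h3 : IntegrableOn (fun v : ℝ => ‖(v : ℂ) ^ (s - 1) • hlPhi v‖ *
          ∫ x in Ioi (0:ℝ), ‖(x : ℂ) ^ (s - 1) • hlPhi x‖) (Ioi 0) :=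
        (Integrable.norm hmc).mul_const _
      refine h3.congr ?_
      filter_upwards [ae_restrict_mem measurableSet_Ioi] with v hv
      have hv : 0 < v := hv
      have hre : (s - 1).re = -(1/2) := by simp [hs]; norm_num
      have h4 := integral_comp_mul_left_Ioi (fun x : ℝ => ‖(x : ℂ) ^ (s - 1) • hlPhi x‖) 0 hv
      rw [mul_zero] at h4
      have h5 : ∫ x in Ioi (0:ℝ), ‖(x : ℂ) ^ (s - 1) • hlPhi x‖
          = v * ∫ x in Ioi (0:ℝ), ‖((v * x : ℝ) : ℂ) ^ (s - 1) • hlPhi ((v * x : ℝ) : ℂ)‖ := by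
        rw [h4, smul_eq_mul, mul_inv_cancel_left₀ hv.ne']
      rw [h5, ← mul_assoc, ← integral_const_mul]
      apply setIntegral_congr_fun measurableSet_Ioi
      intro x hx
      have hx : 0 < x := hx
      simp only [norm_smul, norm_mul]
      rw [Complex.norm_cpow_eq_rpow_re_of_pos hv, Complex.norm_cpow_eq_rpow_re_of_pos hx,
        Complex.norm_cpow_eq_rpow_re_of_pos (by positivity : 0 < v * x), hre,
        Real.mul_rpow hv.le hx.le, mul_comm v x]
      have h6 : v ^ (-(1/2) : ℝ) * v ^ (-(1/2) : ℝ) * v = 1 := by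
        rw [← Real.rpow_add hv]
        norm_num
        rw [Real.rpow_neg_one]
        field_simp
      linear_combination (‖hlPhi v‖ * x ^ (-(1/2) : ℝ) * ‖hlPhi ((x * v : ℝ) : ℂ)‖) * h6
  · apply Measurable.aestronglyMeasurable
    apply Measurable.mul
    · exact (Complex.measurable_ofReal.comp measurable_fst).pow_const _
    · exact (hlPhi_measurable.comp (by fun_prop)).mul (hlPhi_measurable.comp (by fun_prop))

lemma hlC_mc {s : ℂ} (hs : s.re = 1/2) : MellinConvergent hlC s := by
  have := (hlC_prod_integrable hs).integral_prod_left
  refine this.congr ?_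
  filter_upwards with x
  rw [integral_const_mul]
  rfl

lemma hlC_mellin {s : ℂ} (hs : s.re = 1/2) :
    mellin hlC s = mellin (fun t : ℝ => hlPhi t) s * mellin (fun t : ℝ => hlPhi t) (1 - s) := by
  have h1 : mellin hlC s = ∫ x in Ioi (0:ℝ), ∫ v in Ioi (0:ℝ),
      (x : ℂ) ^ (s - 1) * (hlPhi v * hlPhi ((x * v : ℝ) : ℂ)) := by
    unfold mellin
    congr 1; ext x
    rw [integral_const_mul]
    rfl
  rw [h1, integral_integral_swap (hlC_prod_integrable hs)]
  have h2 : ∀ v ∈ Ioi (0:ℝ), (∫ x in Ioi (0:ℝ), (x : ℂ) ^ (s - 1) * (hlPhi v * hlPhi ((x * v : ℝ) : ℂ)))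
      = mellin (fun t : ℝ => hlPhi t) s * ((v : ℂ) ^ (1 - s - 1) • hlPhi v) := by
    intro v hv
    have hv : 0 < v := hv
    have h3 := mellin_comp_mul_left (fun t : ℝ => hlPhi t) s hv
    have h4 : (∫ x in Ioi (0:ℝ), (x : ℂ) ^ (s - 1) * (hlPhi v * hlPhi ((x * v : ℝ) : ℂ)))
        = hlPhi v * mellin (fun t : ℝ => hlPhi ((v * t : ℝ) : ℂ)) s := by
      unfold mellin
      rw [← integral_const_mul]
      congr 1; ext x
      rw [mul_comm x v, smul_eq_mul]; ring
    rw [h4, h3, show 1 - s - 1 = -s by ring]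
    simp only [smul_eq_mul]
    ring
  rw [setIntegral_congr_fun measurableSet_Ioi h2, integral_const_mul]
  rfl

lemma hlC_mellin' (t : ℝ) :
    mellin hlC (1/2 + t * Complex.I) = ((2 * π * hlW t : ℝ) : ℂ) := by
  have hre : (1/2 + t * Complex.I : ℂ).re = 1/2 := by simp
  rw [hlC_mellin hre, hlPhi_mellin (by rw [hre]; norm_num) (by rw [hre]; norm_num),
    hlPhi_mellin (by simp; norm_num) (by simp)]
  have h1 := Complex.Gamma_mul_Gamma_one_sub (1/2 + t * Complex.I)
  have h2 : Complex.sin (π * (1/2 + t * Complex.I)) = (Real.cosh (π * t) : ℂ) := by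
    rw [show (π : ℂ) * (1/2 + t * Complex.I) = π / 2 - (-(π * t) * Complex.I) by ring,
      Complex.sin_pi_div_two_sub, Complex.cos_mul_I, Complex.cosh_neg]
    push_cast; rfl
  rw [h2] at h1
  have h3 : riemannZeta (1/2 + t * Complex.I) * riemannZeta (1 - (1/2 + t * Complex.I)) = (Z2 t : ℂ) := by
    rw [← hl_conj_half, riemannZeta_conj, Complex.mul_conj, Complex.normSq_eq_norm_sq]
    rfl
  have hc : (Real.cosh (π * t) : ℂ) ≠ 0 := by exact_mod_cast (Real.cosh_pos (π * t)).ne'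
  calc _ = (Complex.Gamma (1/2 + t * Complex.I) * Complex.Gamma (1 - (1/2 + t * Complex.I))) *
        (riemannZeta (1/2 + t * Complex.I) * riemannZeta (1 - (1/2 + t * Complex.I))) := by ring
    _ = _ := by
      rw [h1, h3]
      unfold hlW
      push_cast at hc ⊢
      field_simp

lemma hlC_inversion {x : ℝ} (hx : 0 < x) :
    hlC x = ∫ t : ℝ, (x : ℂ) ^ (-(1/2 + t * Complex.I)) * (hlW t : ℂ) := by
  have h := mellinInv_mellin_eq (1/2 : ℝ) hlC hx (hlC_mc (by simp)) ?_ (hlC_continuousAt hx)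
  · rw [← h]
    unfold mellinInv
    rw [Complex.real_smul, ← integral_const_mul]
    congr 1; ext t
    have := hlC_mellin' t
    push_cast at this ⊢
    rw [this, smul_eq_mul]
    field_simp
  · unfold Complex.VerticalIntegrable
    have := (hlW_integrable.const_mul (2 * π)).ofReal (𝕜 := ℂ)
    refine this.congr ?_
    filter_upwards with t
    have h2 := hlC_mellin' t
    push_cast at h2 ⊢
    rw [h2]
    rfl

noncomputable def hlg1 (z : ℝ) : ℂ := hlB z - Complex.exp (-z) / z
noncomputable def hlg2 (z : ℝ) : ℂ := (hlPhi z + 1 / 2 * Complex.exp (-z)) / z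

lemma hl_ofReal_mem {z : ℝ} (hz : 0 < z) : (z : ℂ) ≠ 0 := by exact_mod_cast hz.ne'

lemma hl_exp_norm (z : ℝ) : ‖Complex.exp (-z)‖ = Real.exp (-z) := by
  rw [Complex.norm_exp]; simp

lemma hl_one_sub_exp {z : ℝ} (hz : 0 < z) : ‖1 - Complex.exp (-z)‖ ≤ z := by
  have : (1 : ℂ) - Complex.exp (-z) = ((1 - Real.exp (-z) : ℝ) : ℂ) := by push_cast; rfl
  rw [this, Complex.norm_real, Real.norm_eq_abs, abs_le]
  have h1 := Real.add_one_le_exp (-z)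
  have h2 : Real.exp (-z) ≤ 1 := by simpa using hz.le
  constructor <;> linarith

lemma hlg1_bound {z : ℝ} (hz : 0 < z) : ‖hlg1 z‖ ≤ 20 * Real.exp (-(1/2) * z) := by
  rcases le_total z 1 with h | h
  · have e : hlg1 z = hlPhi z + (1 - Complex.exp (-z)) / z := by
      unfold hlg1; rw [hlB_eq]; ring
    have h1 : ‖hlg1 z‖ ≤ 10 := by
      rw [e]
      refine (norm_add_le _ _).trans ?_
      have := hlPhi_bound hz
      have h2 : 9 / (1 + z) ≤ 9 := div_le_self (by norm_num) (by linarith)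
      have h3 : ‖(1 - Complex.exp (-z)) / z‖ ≤ 1 := by
        rw [norm_div, div_le_one (by simpa using hz.ne')]
        simpa [abs_of_pos hz] using hl_one_sub_exp hz
      linarith
    have h4 := Real.add_one_le_exp (-(1/2) * z)
    linarith
  · have h1 := hlB_real hz
    have h2 : ‖hlB z‖ ≤ Real.exp (-(1/2) * z) := by
      rw [show -(1/2) * z = -z/2 by ring]
      refine le_trans ?_ h1
      exact le_mul_of_one_le_right (norm_nonneg _) h
    have h3 : ‖Complex.exp (-z) / z‖ ≤ Real.exp (-(1/2) * z) := by
      rw [norm_div, hl_exp_norm, Complex.norm_real, Real.norm_eq_abs, abs_of_pos hz]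
      refine (div_le_self (Real.exp_pos _).le h).trans (Real.exp_le_exp.mpr (by linarith))
    unfold hlg1
    refine (norm_sub_le _ _).trans ?_
    have := Real.exp_pos (-(1/2) * z)
    linarith

lemma hlg2_bound {z : ℝ} (hz : 0 < z) : ‖hlg2 z‖ ≤ 10 * (1 + z ^ 2)⁻¹ := by
  unfold hlg2
  rw [norm_div, Complex.norm_real, Real.norm_eq_abs, abs_of_pos hz, div_le_iff₀ hz]
  rcases le_total z 1 with h | h
  · have h1 := hlPhi_near (hl_ofReal_mem hz) (by simpa [abs_of_pos hz] using h)
    have h2 := hl_one_sub_exp hz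
    have e : hlPhi z + 1 / 2 * Complex.exp (-z) = (hlPhi z + 1 / 2) - 1 / 2 * (1 - Complex.exp (-z)) := by ring
    rw [e]
    have h3 : ‖1 / 2 * (1 - Complex.exp (-z))‖ ≤ z := by
      rw [norm_mul]
      have : ‖(1 / 2 : ℂ)‖ = 1 / 2 := by norm_num
      rw [this]; linarith
    rw [Complex.norm_real, Real.norm_eq_abs, abs_of_pos hz] at h1
    have h5 : (5:ℝ) ≤ 10 * (1 + z ^ 2)⁻¹ := by
      rw [← div_eq_mul_inv, le_div_iff₀ (by positivity)]; nlinarith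
    calc _ ≤ 4 * z + z := (norm_sub_le _ _).trans (add_le_add h1 h3)
      _ = 5 * z := by ring
      _ ≤ _ := by gcongr
  · have h1 := hlPhi_norm_real hz
    have h2 : ‖1 / 2 * Complex.exp (-z)‖ ≤ z⁻¹ := by
      rw [norm_mul, hl_exp_norm, Real.exp_neg]
      have : ‖(1 / 2 : ℂ)‖ = 1 / 2 := by norm_num
      rw [this]
      have : (Real.exp z)⁻¹ ≤ z⁻¹ := inv_anti₀ hz (by linarith [Real.add_one_le_exp z])
      have := inv_pos.mpr (Real.exp_pos z)
      linarith
    calc _ ≤ z⁻¹ + z⁻¹ := (norm_add_le _ _).trans (add_le_add h1 h2)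
      _ ≤ _ := by
        rw [← div_eq_mul_inv, div_mul_eq_mul_div, le_div_iff₀ (by positivity)]
        field_simp
        nlinarith

lemma hlg1_measurable : Measurable hlg1 := by
  unfold hlg1
  exact (hlB_measurable.comp Complex.measurable_ofReal).sub (by fun_prop)
lemma hlg2_measurable : Measurable hlg2 := by
  unfold hlg2
  exact ((hlPhi_measurable.comp Complex.measurable_ofReal).add (by fun_prop)).div (by fun_prop)

lemma hlg1_integrable : IntegrableOn hlg1 (Ioi 0) := by
  refine Integrable.mono' ((integrableOn_exp_mul_Ioi (a := -(1/2)) (by norm_num) 0).const_mul 20)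
    hlg1_measurable.aestronglyMeasurable ?_
  filter_upwards [ae_restrict_mem measurableSet_Ioi] with z hz using hlg1_bound hz
lemma hlg2_integrable : IntegrableOn hlg2 (Ioi 0) := by
  refine Integrable.mono' ((integrable_inv_one_add_sq.const_mul 10).integrableOn)
    hlg2_measurable.aestronglyMeasurable ?_
  filter_upwards [ae_restrict_mem measurableSet_Ioi] with z hz using hlg2_bound hz

lemma hlg1_cpow {e : ℝ} (he : 0 < e) :
    IntegrableOn (fun z : ℝ => (z : ℂ) ^ (e : ℂ) * hlg1 z) (Ioi 0) ∧
    ∫ z in Ioi (0:ℝ), (z : ℂ) ^ (e : ℂ) * hlg1 z =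
      Complex.Gamma (1 + e) * riemannZeta (1 + e) - Complex.Gamma e := by
  have h1 := hlB_mellinConvergent (s := 1 + e) (by simpa using he)
  have h2 := Complex.GammaIntegral_convergent (s := e) (by simpa using he)
  have h3 := hl_mellin_B (s := 1 + e) (by simpa using he)
  have h4 := Complex.Gamma_eq_integral (s := e) (by simpa using he)
  unfold MellinConvergent at h1
  have key : EqOn (fun z : ℝ => (z:ℂ) ^ ((1 + e : ℂ) - 1) • hlB z - (((-z).exp : ℝ) : ℂ) * (z:ℂ) ^ ((e:ℂ) - 1))
      (fun z : ℝ => (z : ℂ) ^ (e : ℂ) * hlg1 z) (Ioi 0) := by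
    intro z hz
    have hz : 0 < z := hz
    have hz0 := hl_ofReal_mem hz
    simp only [smul_eq_mul, hlg1]
    rw [add_sub_cancel_left, Complex.cpow_sub _ _ hz0, Complex.cpow_one]
    push_cast
    field_simp
  constructor
  · exact (h1.sub h2).congr_fun key measurableSet_Ioi
  · rw [← setIntegral_congr_fun measurableSet_Ioi key, integral_sub h1 h2, ← h3, h4]
    rfl

lemma hlg2_cpow {e : ℝ} (he : 0 < e) (he1 : e < 1) :
    IntegrableOn (fun z : ℝ => (z : ℂ) ^ (e : ℂ) * hlg2 z) (Ioi 0) ∧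
    ∫ z in Ioi (0:ℝ), (z : ℂ) ^ (e : ℂ) * hlg2 z =
      Complex.Gamma e * (riemannZeta e + 1 / 2) := by
  have h1 := hlPhi_mc (s := e) (by simpa using he) (by simpa using he1)
  have h2 := Complex.GammaIntegral_convergent (s := e) (by simpa using he)
  have h3 := hlPhi_mellin (s := e) (by simpa using he) (by simpa using he1)
  have h4 := Complex.Gamma_eq_integral (s := e) (by simpa using he)
  unfold MellinConvergent at h1
  have key : EqOn (fun z : ℝ => (z:ℂ) ^ ((e : ℂ) - 1) • hlPhi z + 1 / 2 * ((((-z).exp : ℝ) : ℂ) * (z:ℂ) ^ ((e:ℂ) - 1)))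
      (fun z : ℝ => (z : ℂ) ^ (e : ℂ) * hlg2 z) (Ioi 0) := by
    intro z hz
    have hz : 0 < z := hz
    have hz0 := hl_ofReal_mem hz
    simp only [smul_eq_mul, hlg2]
    rw [Complex.cpow_sub _ _ hz0, Complex.cpow_one]
    push_cast
    field_simp
  constructor
  · exact (h1.add (h2.const_mul (1/2))).congr_fun key measurableSet_Ioi
  · rw [← setIntegral_congr_fun measurableSet_Ioi key, integral_add h1 (h2.const_mul _),
      integral_const_mul, mul_add, ← h3, h4]
    unfold mellin Complex.GammaIntegral
    ring

/-- letting the exponent tend to zero -/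
lemma hl_cpow_limit {g : ℝ → ℂ} {r : ℝ} (hr : 0 < r) (hm : Measurable g) (h0 : IntegrableOn g (Ioi 0))
    (h1 : IntegrableOn (fun z : ℝ => (z : ℂ) ^ (r : ℂ) * g z) (Ioi 0)) :
    Tendsto (fun e : ℝ => ∫ z in Ioi (0:ℝ), (z : ℂ) ^ (e : ℂ) * g z) (nhdsWithin 0 (Ioi 0))
      (nhds (∫ z in Ioi (0:ℝ), g z)) := by
  refine tendsto_integral_filter_of_dominated_convergence
    (fun z => ‖g z‖ + ‖(z : ℂ) ^ (r : ℂ) * g z‖) ?_ ?_ (h0.norm.add h1.norm) ?_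
  · filter_upwards with e
    exact ((Complex.measurable_ofReal.pow_const _).mul hm).aestronglyMeasurable
  · have : Ioc (0:ℝ) r ∈ nhdsWithin (0:ℝ) (Ioi 0) := Ioc_mem_nhdsGT hr
    filter_upwards [this] with e he
    filter_upwards [ae_restrict_mem measurableSet_Ioi] with z hz
    have hz : 0 < z := hz
    rw [norm_mul, norm_mul, Complex.norm_cpow_eq_rpow_re_of_pos hz,
      Complex.norm_cpow_eq_rpow_re_of_pos hz]
    simp only [Complex.ofReal_re]
    have : z ^ e ≤ 1 + z ^ r := by
      rcases le_total z 1 with h | h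
      · have := Real.rpow_le_one hz.le h he.1.le
        have := Real.rpow_pos_of_pos hz r
        linarith
      · have := Real.rpow_le_rpow_of_exponent_le h he.2
        linarith
    nlinarith [norm_nonneg (g z)]
  · filter_upwards [ae_restrict_mem measurableSet_Ioi] with z hz
    have hz0 := hl_ofReal_mem hz
    have : ContinuousAt (fun e : ℝ => (z : ℂ) ^ (e : ℂ) * g z) 0 := by
      apply ContinuousAt.mul _ continuousAt_const
      exact ContinuousAt.const_cpow (by fun_prop) (Or.inl hz0)
    have h := this.tendsto.mono_left (nhdsWithin_le_nhds (s := Ioi 0))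
    simpa using h

lemma hl_Gamma_lim : Tendsto (fun e : ℝ => Complex.Gamma (1 + e)) (nhdsWithin 0 (Ioi 0)) (nhds 1) := by
  have : ContinuousAt (fun e : ℝ => Complex.Gamma (1 + e)) 0 := by
    have h : ContinuousAt Complex.Gamma (1 + ((0:ℝ) : ℂ)) := by
      simpa using (Complex.differentiableAt_Gamma_one).continuousAt
    exact ContinuousAt.comp (f := fun e : ℝ => (1 + e : ℂ)) h (by fun_prop)
  have h := this.tendsto.mono_left (nhdsWithin_le_nhds (s := Ioi 0))
  simpa using h

lemma hlg1_integral : ∫ z in Ioi (0:ℝ), hlg1 z = (eulerMascheroniConstant : ℂ) := by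
  have h := hl_cpow_limit one_pos hlg1_measurable hlg1_integrable (hlg1_cpow one_pos).1
  refine tendsto_nhds_unique h ?_
  have h2 : Tendsto (fun e : ℝ => (1 + e : ℂ)) (nhdsWithin 0 (Ioi 0)) (nhdsWithin 1 {1}ᶜ) := by
    apply tendsto_nhdsWithin_of_tendsto_nhds_of_eventually_within
    · have : ContinuousAt (fun e : ℝ => (1 + e : ℂ)) 0 := by fun_prop
      simpa using this.tendsto.mono_left (nhdsWithin_le_nhds (s := Ioi 0))
    · filter_upwards [self_mem_nhdsWithin] with e he
      have := hl_ofReal_mem he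
      simpa using this
  have h3 := hl_Gamma_lim.mul (tendsto_riemannZeta_sub_one_div.comp h2)
  rw [one_mul] at h3
  refine h3.congr' ?_
  filter_upwards [self_mem_nhdsWithin] with e he
  rw [(hlg1_cpow he).2]
  have he0 := hl_ofReal_mem he
  have := Complex.Gamma_add_one _ he0
  simp only [Function.comp]
  rw [add_comm (1:ℂ) e, add_sub_cancel_right, this]
  field_simp

lemma hlg2_integral : ∫ z in Ioi (0:ℝ), hlg2 z = ((-(1/2) * Real.log (2 * π) : ℝ) : ℂ) := by
  have h := hl_cpow_limit (r := 1/2) (by norm_num) hlg2_measurable hlg2_integrable (hlg2_cpow (by norm_num) (by norm_num)).1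
  refine tendsto_nhds_unique h ?_
  have h2 : Tendsto (fun e : ℝ => (e : ℂ)) (nhdsWithin 0 (Ioi 0)) (nhdsWithin 0 {0}ᶜ) := by
    apply tendsto_nhdsWithin_of_tendsto_nhds_of_eventually_within
    · have : ContinuousAt (fun e : ℝ => (e : ℂ)) 0 := by fun_prop
      simpa using this.tendsto.mono_left (nhdsWithin_le_nhds (s := Ioi 0))
    · filter_upwards [self_mem_nhdsWithin] with e he
      have := hl_ofReal_mem he
      simpa using this
  have hd : HasDerivAt riemannZeta (deriv riemannZeta 0) 0 :=
    (differentiableAt_riemannZeta (by norm_num)).hasDerivAt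
  have h3 := hl_Gamma_lim.mul ((hasDerivAt_iff_tendsto_slope.mp hd).comp h2)
  rw [one_mul, deriv_riemannZeta_zero] at h3
  have e1 : (-Complex.log (2 * π) / 2 : ℂ) = ((-(1/2) * Real.log (2 * π) : ℝ) : ℂ) := by
    push_cast
    rw [Complex.ofReal_log (by positivity)]
    push_cast
    ring
  rw [← e1]
  refine h3.congr' ?_
  have : Ioo (0:ℝ) 1 ∈ nhdsWithin (0:ℝ) (Ioi 0) := Ioo_mem_nhdsGT one_pos
  filter_upwards [this] with e he
  rw [(hlg2_cpow he.1 he.2).2]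
  have he0 := hl_ofReal_mem he.1
  have := Complex.Gamma_add_one _ he0
  simp only [Function.comp, slope_def_field, riemannZeta_zero]
  rw [add_comm (1:ℂ) e, this]
  field_simp
  ring

noncomputable def hlXI (p : ℂ) (z : ℝ) : ℂ := hlB z * (hlPhi (p * z) + 1 / 2)
noncomputable def hlX (p : ℂ) : ℂ := ∫ z in Ioi (0:ℝ), hlXI p z

lemma hlXI_measurable (p : ℂ) : Measurable (hlXI p) := by
  unfold hlXI
  exact (hlB_measurable.comp Complex.measurable_ofReal).mul
    ((hlPhi_measurable.comp (by fun_prop)).add measurable_const)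

lemma hlXI_bound {p : ℂ} (hp : 0 < p.re) {z : ℝ} (hz : 0 < z) :
    ‖hlXI p z‖ ≤ (4 + 2 / p.re * ‖p‖) * ‖p‖ * Real.exp (-(1/2) * z) := by
  unfold hlXI
  rw [norm_mul]
  calc _ ≤ ‖hlB z‖ * ((4 + 2 / p.re * ‖p‖) * ‖p‖ * z) := by
        gcongr; exact hlPhi_ray hp hz
    _ = (4 + 2 / p.re * ‖p‖) * ‖p‖ * (‖hlB z‖ * z) := by ring
    _ ≤ (4 + 2 / p.re * ‖p‖) * ‖p‖ * Real.exp (-z / 2) := by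
        gcongr; exact hlB_real hz
    _ = _ := by congr 2; ring

lemma hlXI_integrable {p : ℂ} (hp : 0 < p.re) : IntegrableOn (hlXI p) (Ioi 0) := by
  refine Integrable.mono' ((integrableOn_exp_mul_Ioi (a := -(1/2)) (by norm_num) 0).const_mul
    ((4 + 2 / p.re * ‖p‖) * ‖p‖)) (hlXI_measurable p).aestronglyMeasurable ?_
  filter_upwards [ae_restrict_mem measurableSet_Ioi] with z hz using hlXI_bound hp hz

/-- Frullani integral for the exponential. -/
lemma hl_frullani {a b : ℝ} (ha : 0 < a) (hab : a ≤ b) :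
    IntegrableOn (fun z : ℝ => (Complex.exp (-(a * z)) - Complex.exp (-(b * z))) / z) (Ioi 0) ∧
    ∫ z in Ioi (0:ℝ), (Complex.exp (-(a * z)) - Complex.exp (-(b * z))) / z = (Real.log (b / a) : ℂ) := by
  have hi : IntegrableOn (fun z : ℝ => z⁻¹ • (Real.exp (-(a * z)) - Real.exp (-(b * z)))) (Ioi 0) := by
    refine Integrable.mono' ((integrableOn_exp_mul_Ioi (a := -a) (by linarith) 0).const_mul (b - a))
      (Measurable.aestronglyMeasurable (by fun_prop)) ?_
    filter_upwards [ae_restrict_mem measurableSet_Ioi] with z hz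
    have hz : 0 < z := hz
    have h1 : Real.exp (-(b * z)) = Real.exp (-(a*z)) * Real.exp (-((b - a) * z)) := by
      rw [← Real.exp_add]; congr 1; ring
    have h2 := Real.add_one_le_exp (-((b - a) * z))
    have h3 : Real.exp (-((b - a) * z)) ≤ 1 := by
      rw [Real.exp_le_one_iff]; nlinarith
    have h4 := Real.exp_pos (-(a*z))
    rw [norm_smul, norm_inv, Real.norm_eq_abs, abs_of_pos hz, inv_mul_le_iff₀ hz, Real.norm_eq_abs,
      abs_of_nonneg (by rw [h1]; nlinarith), h1, neg_mul]
    nlinarith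
  have h := Frullani.integral_Ioi_eq (f := fun x : ℝ => Real.exp (-x)) (L := 1) (R := 0) (a := a) (b := b)
    ((Continuous.locallyIntegrable (by fun_prop : Continuous fun x : ℝ => Real.exp (-x))).locallyIntegrableOn _) ha (ha.trans_le hab) ?_ ?_ hi
  · have key : (fun z : ℝ => (Complex.exp (-(a * z)) - Complex.exp (-(b * z))) / z) =
        fun z : ℝ => ((z⁻¹ • (Real.exp (-(a * z)) - Real.exp (-(b * z))) : ℝ) : ℂ) := by
      ext z; rw [smul_eq_mul]; push_cast; ring
    rw [key]
    refine ⟨hi.ofReal, ?_⟩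
    rw [integral_complex_ofReal, h]
    simp
  · have : ContinuousAt (fun x : ℝ => Real.exp (-x)) 0 := by fun_prop
    simpa using this.tendsto.mono_left (nhdsWithin_le_nhds (s := Ioi 0))
  · exact Real.tendsto_exp_neg_atTop_nhds_zero

lemma hl_scale {g : ℝ → ℂ} {a : ℝ} (ha : 0 < a) (hg : IntegrableOn g (Ioi 0)) :
    IntegrableOn (fun z => g (a * z)) (Ioi 0) ∧
    ∫ z in Ioi (0:ℝ), g (a * z) = (a : ℂ)⁻¹ * ∫ z in Ioi (0:ℝ), g z := by
  constructor
  · rw [integrableOn_Ioi_comp_mul_left_iff _ _ ha]; simpa using hg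
  · rw [integral_comp_mul_left_Ioi _ _ ha]; simp

lemma hl_pointwise {l z : ℝ} (hl : 0 < l) (hz : 0 < z) :
    hlPhi z * hlPhi ((l * z : ℝ) : ℂ) =
      (-(1 / (l * (1 + l)))) * hlg2 z + (-(l * l / (1 + l))) * hlg2 (l * z) + hlg1 ((1 + l) * z)
      + hlXI (1 + l) z + hlXI (1 + 1 / l) (l * z) + (-(1/2)) * hlg1 z + (-(1/2)) * hlg1 (l * z)
      + (1 / (2 * l * (1 + l)) - 1 / 2) * ((Complex.exp (-((1:ℝ) * z)) - Complex.exp (-(((1 + l : ℝ):ℂ) * z))) / z)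
      + (l / (2 * (1 + l)) - 1 / (2 * l)) * ((Complex.exp (-(l * z)) - Complex.exp (-(((1 + l : ℝ):ℂ) * z))) / z) := by
  have hz0 := hl_ofReal_mem hz
  have hl0 := hl_ofReal_mem hl
  have hp0 : (1 + l : ℂ) ≠ 0 := by exact_mod_cast (by positivity : (1 + l) ≠ 0)
  have n1 := hl_exp_sub_one_ne (w := (z:ℂ)) (by simpa using hz)
  have n2 := hl_exp_sub_one_ne (w := (l * z:ℂ)) (by rw [← Complex.ofReal_mul, Complex.ofReal_re]; positivity)
  have n3 := hl_exp_sub_one_ne (w := ((1 + l) * z:ℂ)) (by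
    have : ((1 + l) * z:ℂ) = (((1 + l) * z : ℝ) : ℂ) := by push_cast; rfl
    rw [this, Complex.ofReal_re]; positivity)
  have hB : hlB z * hlB (l * z) = hlB ((1 + l) * z) * (1 + hlB z + hlB (l * z)) := by
    unfold hlB
    have : Complex.exp ((1 + l) * z) = Complex.exp z * Complex.exp (l * z) := by
      rw [← Complex.exp_add]; congr 1; ring
    rw [this] at n3 ⊢
    field_simp
    ring
  have e1 : (1 + 1 / l : ℂ) * ((l * z : ℝ) : ℂ) = (1 + l) * z := by push_cast; field_simp; ring
  unfold hlXI hlg1 hlg2 hlPhi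
  rw [e1]
  push_cast
  generalize hlB z = b1 at *
  generalize hlB (l * z) = b2 at *
  generalize hlB ((1 + l) * z) = b3 at *
  rw [one_mul, show -((1 + (l:ℂ)) * z) = -(z:ℂ) + -(l * z) by ring]
  generalize Complex.exp (-(z:ℂ)) = E1 at *
  generalize Complex.exp (-(l * z:ℂ)) = E2 at *
  generalize Complex.exp (-(z:ℂ) + -(l * z)) = E3 at *
  have : (b1 - (z:ℂ)⁻¹) * (b2 - (l * z : ℂ)⁻¹) = b1 * b2 - b1 * (l * z : ℂ)⁻¹ - b2 * (z:ℂ)⁻¹ + (z:ℂ)⁻¹ * (l * z : ℂ)⁻¹ := by ring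
  rw [this, hB]
  field_simp
  ring

/-- integrable with integral `a` -/
def hlHI (f : ℝ → ℂ) (a : ℂ) : Prop := IntegrableOn f (Ioi 0) ∧ ∫ z in Ioi (0:ℝ), f z = a

lemma hlHI.add {f g : ℝ → ℂ} {a b : ℂ} (hf : hlHI f a) (hg : hlHI g b) :
    hlHI (fun z => f z + g z) (a + b) := by
  refine ⟨Integrable.add hf.1 hg.1, ?_⟩
  rw [integral_add hf.1 hg.1, hf.2, hg.2]

lemma hlHI.const_mul {f : ℝ → ℂ} {a : ℂ} (hf : hlHI f a) (c : ℂ) :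
    hlHI (fun z => c * f z) (c * a) := by
  refine ⟨Integrable.const_mul hf.1 c, ?_⟩
  rw [integral_const_mul, hf.2]

lemma hlHI.scale {f : ℝ → ℂ} {b : ℂ} (hf : hlHI f b) {a : ℝ} (ha : 0 < a) :
    hlHI (fun z => f (a * z)) ((a : ℂ)⁻¹ * b) := by
  have := hl_scale ha hf.1
  rw [hf.2] at this
  exact this

lemma hlC_formula {l : ℝ} (hl : 0 < l) :
    hlC l = (1 / l + l) / (1 + l) * (1 / 2 * Real.log (2 * π)) + eulerMascheroniConstant / (1 + l)
      - eulerMascheroniConstant / 2 - eulerMascheroniConstant / (2 * l)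
      + hlX (1 + l) + hlX (1 + 1 / l) / l
      + (1 / (2 * l * (1 + l)) - 1 / 2) * Real.log (1 + l)
      + (l / (2 * (1 + l)) - 1 / (2 * l)) * (Real.log (1 + l) - Real.log l) := by
  have hp : 0 < 1 + l := by linarith
  have hl0 := hl_ofReal_mem hl
  have hp0 : (1 + l : ℂ) ≠ 0 := by exact_mod_cast hp.ne'
  have hr1 : 0 < (1 + l : ℂ).re := by simpa using hp
  have hr2 : 0 < (1 + 1 / l : ℂ).re := by
    have : (1 + 1 / l : ℂ) = ((1 + 1 / l : ℝ) : ℂ) := by push_cast; rfl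
    rw [this, Complex.ofReal_re]; positivity
  have g1 : hlHI hlg1 _ := ⟨hlg1_integrable, hlg1_integral⟩
  have g2 : hlHI hlg2 _ := ⟨hlg2_integrable, hlg2_integral⟩
  have x1 : hlHI (hlXI (1 + l)) (hlX (1 + l)) := ⟨hlXI_integrable hr1, rfl⟩
  have x2 : hlHI (hlXI (1 + 1 / l)) (hlX (1 + 1 / l)) := ⟨hlXI_integrable hr2, rfl⟩
  have f1 : hlHI _ _ := hl_frullani one_pos (by linarith : 1 ≤ 1 + l)
  have f2 : hlHI _ _ := hl_frullani hl (by linarith : l ≤ 1 + l)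
  have H := ((((((((g2.const_mul (-(1 / (l * (1 + l))))).add ((g2.scale hl).const_mul (-(l * l / (1 + l))))).add
    (g1.scale hp)).add x1).add (x2.scale hl)).add (g1.const_mul (-(1/2)))).add
    ((g1.scale hl).const_mul (-(1/2)))).add (f1.const_mul (1 / (2 * l * (1 + l)) - 1 / 2))).add
    (f2.const_mul (l / (2 * (1 + l)) - 1 / (2 * l)))
  unfold hlC
  rw [setIntegral_congr_fun measurableSet_Ioi (fun z hz => hl_pointwise hl hz)]
  refine H.2.trans ?_
  rw [Real.log_div hp.ne' hl.ne', div_one]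
  push_cast
  field_simp
  ring

/-- Holomorphy of parametric integrals with local domination. -/
lemma hl_param {μ : Measure ℝ} {F : ℂ → ℝ → ℂ} {U : Set ℂ}
    (hm : ∀ z ∈ U, AEStronglyMeasurable (F z) μ)
    (hd : ∀ᵐ a ∂μ, DifferentiableOn ℂ (fun z => F z a) U)
    (hb : ∀ z₀ ∈ U, ∃ r > 0, Metric.ball z₀ r ⊆ U ∧ ∃ g : ℝ → ℝ, Integrable g μ ∧
      ∀ᵐ a ∂μ, ∀ z ∈ Metric.ball z₀ r, ‖F z a‖ ≤ g a) :
    DifferentiableOn ℂ (fun z => ∫ a, F z a ∂μ) U := by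
  intro z₀ hz₀
  obtain ⟨r, hr, hrU, g, hg, hbd⟩ := hb z₀ hz₀
  have hball : ∀ᵐ a ∂μ, ∀ z ∈ Metric.ball z₀ r, DifferentiableAt ℂ (fun z => F z a) z := by
    filter_upwards [hd] with a ha z hz
    exact (ha.mono hrU).differentiableAt (Metric.isOpen_ball.mem_nhds hz)
  have hz0b : z₀ ∈ Metric.ball z₀ r := Metric.mem_ball_self hr
  have hmeas : AEStronglyMeasurable (fun a => deriv (fun z => F z a) z₀) μ := by
    have hseq : Tendsto (fun n : ℕ => z₀ + ((r / 2 / ((n:ℝ) + 1) : ℝ) : ℂ)) atTop (nhdsWithin z₀ {z₀}ᶜ) := by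
      apply tendsto_nhdsWithin_of_tendsto_nhds_of_eventually_within
      · have h1 : Tendsto (fun n : ℕ => r / 2 * (1 / ((n:ℝ) + 1))) atTop (nhds (r / 2 * 0)) :=
          tendsto_one_div_add_atTop_nhds_zero_nat.const_mul _
        have h2 := (Complex.continuous_ofReal.tendsto _).comp h1
        have h3 := h2.const_add z₀
        simp only [mul_zero, Complex.ofReal_zero, add_zero] at h3
        refine h3.congr fun n => ?_
        simp only [Function.comp]
        congr 2
        ring
      · filter_upwards with n
        have : (0:ℝ) < r / 2 / ((n:ℝ) + 1) := by positivity
        have h2 := hl_ofReal_mem this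
        rw [mem_compl_iff, mem_singleton_iff, add_eq_left]
        exact h2
    refine aestronglyMeasurable_of_tendsto_ae (u := atTop)
      (f := fun (n : ℕ) a => slope (fun z => F z a) z₀ (z₀ + ((r / 2 / ((n:ℝ) + 1) : ℝ) : ℂ))) ?_ ?_
    · intro n
      simp only [slope_def_field]
      have hn : z₀ + ((r / 2 / ((n:ℝ) + 1) : ℝ) : ℂ) ∈ U := by
        apply hrU
        have h0 : (0:ℝ) < r / 2 / ((n:ℝ) + 1) := by positivity
        rw [Metric.mem_ball, dist_eq_norm, add_sub_cancel_left, Complex.norm_real, Real.norm_eq_abs,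
          abs_of_pos h0]
        have : r / 2 / ((n:ℝ) + 1) ≤ r / 2 := div_le_self (by positivity) (by linarith [n.cast_nonneg (α := ℝ)])
        linarith
      have := ((hm _ hn).sub (hm _ hz₀)).mul_const (z₀ + ((r / 2 / ((n:ℝ) + 1) : ℝ) : ℂ) - z₀)⁻¹
      exact this.congr (Eventually.of_forall fun a => (div_eq_mul_inv _ _).symm)
    · filter_upwards [hball] with a ha
      exact (hasDerivAt_iff_tendsto_slope.mp (ha z₀ hz0b).hasDerivAt).comp hseq
  have h := hasDerivAt_integral_of_dominated_loc_of_deriv_le (μ := μ) (F := F) (x₀ := z₀)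
    (F' := fun z a => deriv (fun z => F z a) z) (bound := fun a => g a / (r / 2))
    (Metric.ball_mem_nhds z₀ (half_pos hr)) ?_ ?_ hmeas ?_ (hg.div_const _) ?_
  · exact h.2.differentiableAt.differentiableWithinAt
  · filter_upwards [Metric.ball_mem_nhds z₀ hr] with z hz using hm z (hrU hz)
  · refine hg.mono' (hm _ hz₀) ?_
    filter_upwards [hbd] with a ha using ha z₀ hz0b
  · filter_upwards [hbd, hball] with a ha hda z hz
    have hsub : Metric.closedBall z (r / 2) ⊆ Metric.ball z₀ r := by
      intro w hw
      rw [Metric.mem_closedBall] at hw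
      rw [Metric.mem_ball] at hz ⊢
      linarith [dist_triangle w z z₀]
    apply Complex.norm_deriv_le_of_forall_mem_sphere_norm_le (half_pos hr)
    · apply DifferentiableOn.diffContOnCl
      intro w hw
      exact (hda w (hsub (Metric.closure_ball_subset_closedBall hw))).differentiableWithinAt
    · intro w hw
      exact ha w (hsub (Metric.sphere_subset_closedBall hw))
  · filter_upwards [hball] with a ha z hz
    exact (ha z (Metric.ball_subset_ball (by linarith) hz)).hasDerivAt

lemma hlX_differentiableOn : DifferentiableOn ℂ hlX {p : ℂ | 0 < p.re} := by
  have hopen : IsOpen {p : ℂ | 0 < p.re} := isOpen_lt continuous_const Complex.continuous_re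
  apply hl_param
  · intro p _; exact (hlXI_measurable p).aestronglyMeasurable
  · filter_upwards [ae_restrict_mem measurableSet_Ioi] with z hz
    have hz : 0 < z := hz
    intro p hp
    have hp : 0 < p.re := hp
    have hre : 0 < (p * z).re := by simpa using mul_pos hp hz
    have hne : p * z ≠ 0 := by intro h; rw [h] at hre; simp at hre
    unfold hlXI hlPhi hlB
    apply DifferentiableAt.differentiableWithinAt
    apply DifferentiableAt.const_mul
    apply DifferentiableAt.add_const
    apply DifferentiableAt.sub
    · exact DifferentiableAt.inv (by fun_prop) (hl_exp_sub_one_ne hre)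
    · exact DifferentiableAt.inv (by fun_prop) hne
  · intro p₀ hp₀
    have hp₀ : 0 < p₀.re := hp₀
    have key : ∀ p ∈ Metric.ball p₀ (p₀.re / 2), p₀.re / 2 ≤ p.re ∧ ‖p‖ ≤ 2 * ‖p₀‖ := by
      intro p hp
      rw [Metric.mem_ball, dist_eq_norm] at hp
      have h1 := Complex.abs_re_le_norm (p - p₀)
      have h2 := Complex.re_le_norm p₀
      have h3 := norm_sub_norm_le p p₀
      rw [Complex.sub_re] at h1
      have := (abs_le.mp h1).1
      constructor <;> linarith
    refine ⟨p₀.re / 2, half_pos hp₀, ?_, fun z => (4 + 2 / (p₀.re / 2) * (2 * ‖p₀‖)) * (2 * ‖p₀‖) * Real.exp (-(1/2) * z), ?_, ?_⟩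
    · intro p hp
      have := (key p hp).1
      show 0 < p.re
      linarith
    · exact (integrableOn_exp_mul_Ioi (a := -(1/2)) (by norm_num) 0).const_mul _
    · filter_upwards [ae_restrict_mem measurableSet_Ioi] with z hz p hp
      obtain ⟨h1, h2⟩ := key p hp
      refine (hlXI_bound (by linarith) hz).trans ?_
      gcongr

noncomputable def hlK (θ : ℂ) : ℂ := ∫ t : ℝ, (hlW t : ℂ) * Complex.exp (2 * θ * t)

lemma hlK_integrand_bound {a : ℝ} {θ : ℂ} (h : |θ.re| ≤ a) (t : ℝ) :
    ‖(hlW t : ℂ) * Complex.exp (2 * θ * t)‖ ≤ 4 * ((1 + |t|) ^ 2 * Real.exp (-(π - 2 * a) * |t|)) := by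
  rw [norm_mul, Complex.norm_real, Real.norm_eq_abs, abs_of_nonneg (hlW_nonneg t), Complex.norm_exp]
  have e : (2 * θ * t).re = 2 * (θ.re * t) := by simp [mul_assoc]
  have h1 : θ.re * t ≤ a * |t| := by
    calc θ.re * t ≤ |θ.re * t| := le_abs_self _
      _ = |θ.re| * |t| := abs_mul _ _
      _ ≤ _ := by gcongr
  calc _ ≤ 4 * ((1 + |t|) ^ 2 * Real.exp (-π * |t|)) * Real.exp (2 * (a * |t|)) := by
        rw [e]; gcongr; exact hlW_bound t
    _ = 4 * ((1 + |t|) ^ 2 * (Real.exp (-π * |t|) * Real.exp (2 * (a * |t|)))) := by ring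
    _ = _ := by rw [← Real.exp_add]; congr 3; ring

lemma hlK_measurable (θ : ℂ) : Measurable fun t : ℝ => (hlW t : ℂ) * Complex.exp (2 * θ * t) := by
  have := hlW_continuous.measurable
  fun_prop

lemma hlK_differentiableOn : DifferentiableOn ℂ hlK {θ : ℂ | |θ.re| < π / 2} := by
  apply hl_param
  · intro p _; exact (hlK_measurable p).aestronglyMeasurable
  · filter_upwards with t
    fun_prop
  · intro θ₀ h₀
    have h₀ : |θ₀.re| < π / 2 := h₀
    set r := (π / 2 - |θ₀.re|) / 2 with hr
    have key : ∀ θ ∈ Metric.ball θ₀ r, |θ.re| ≤ |θ₀.re| + r := by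
      intro p hp
      rw [Metric.mem_ball, dist_eq_norm] at hp
      have h1 := Complex.abs_re_le_norm (p - θ₀)
      rw [Complex.sub_re] at h1
      have := abs_sub_abs_le_abs_sub p.re θ₀.re
      linarith
    refine ⟨r, by linarith, ?_, fun t => 4 * ((1 + |t|) ^ 2 * Real.exp (-(π - 2 * (|θ₀.re| + r)) * |t|)), ?_, ?_⟩
    · intro p hp
      have := key p hp
      show |p.re| < _
      linarith
    · exact (hl_poly_exp_integrable (by rw [hr]; linarith)).const_mul 4
    · filter_upwards with t θ hθ using hlK_integrand_bound (key θ hθ) t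

noncomputable def hlR (θ : ℂ) : ℂ :=
  (eulerMascheroniConstant + Complex.cos (2 * θ) * Real.log (2 * π) - Complex.log (2 * Complex.cos θ)) / (2 * Complex.cos θ)
  + 2 * θ * Complex.sin θ - eulerMascheroniConstant * Complex.cos θ
  + Complex.exp (θ * Complex.I) * hlX (1 + Complex.exp (2 * θ * Complex.I))
  + Complex.exp (-(θ * Complex.I)) * hlX (1 + Complex.exp (-(2 * θ * Complex.I)))

def hlV : Set ℂ := {θ : ℂ | |θ.re| < π / 2} ∩ ({θ : ℂ | 0 < (1 + Complex.exp (2 * θ * Complex.I)).re}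
  ∩ {θ : ℂ | 0 < (1 + Complex.exp (-(2 * θ * Complex.I))).re})

lemma hlV_open : IsOpen hlV := by
  apply IsOpen.inter
  · exact isOpen_lt (by fun_prop) continuous_const
  apply IsOpen.inter
  · exact isOpen_lt continuous_const (Complex.continuous_re.comp (by fun_prop))
  · exact isOpen_lt continuous_const (Complex.continuous_re.comp (by fun_prop))

lemma hl_cos_re {θ : ℂ} (h : |θ.re| < π / 2) : 0 < (Complex.cos θ).re := by
  have : (Complex.cos θ).re = Real.cos θ.re * Real.cosh θ.im := by
    rw [Complex.cos_eq]
    rw [← Complex.ofReal_cos, ← Complex.ofReal_cosh, ← Complex.ofReal_sin, ← Complex.ofReal_sinh]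
    rw [Complex.sub_re, ← Complex.ofReal_mul, Complex.ofReal_re, ← Complex.ofReal_mul, Complex.re_ofReal_mul, Complex.I_re]
    ring
  rw [this]
  have h := abs_lt.mp h
  exact mul_pos (Real.cos_pos_of_mem_Ioo ⟨h.1, h.2⟩) (Real.cosh_pos _)

lemma hlR_differentiableOn : DifferentiableOn ℂ hlR hlV := by
  intro θ hθ
  obtain ⟨h1, h2, h3⟩ := hθ
  have hc := hl_cos_re h1
  have hc2 : 0 < (2 * Complex.cos θ).re := by simpa using hc
  have hc0 : 2 * Complex.cos θ ≠ 0 := by intro h; rw [h] at hc2; simp at hc2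
  have hopen : IsOpen {p : ℂ | 0 < p.re} := isOpen_lt continuous_const Complex.continuous_re
  have hX : ∀ p : ℂ, 0 < p.re → DifferentiableAt ℂ hlX p := fun p hp =>
    hlX_differentiableOn.differentiableAt (hopen.mem_nhds hp)
  have hdc : DifferentiableAt ℂ (fun θ : ℂ => 2 * Complex.cos θ) θ := by fun_prop
  have hlog : DifferentiableAt ℂ (fun θ : ℂ => Complex.log (2 * Complex.cos θ)) θ :=
    hdc.clog (Or.inl hc2)
  have hx1 : DifferentiableAt ℂ (fun θ : ℂ => hlX (1 + Complex.exp (2 * θ * Complex.I))) θ :=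
    DifferentiableAt.comp θ (g := hlX) (hX _ h2) (by fun_prop)
  have hx2 : DifferentiableAt ℂ (fun θ : ℂ => hlX (1 + Complex.exp (-(2 * θ * Complex.I)))) θ :=
    DifferentiableAt.comp θ (g := hlX) (hX _ h3) (by fun_prop)
  apply DifferentiableAt.differentiableWithinAt
  unfold hlR
  refine DifferentiableAt.add (DifferentiableAt.add (DifferentiableAt.sub (DifferentiableAt.add
    (DifferentiableAt.div (DifferentiableAt.sub (by fun_prop) hlog) hdc hc0) (by fun_prop)) (by fun_prop))
    (DifferentiableAt.mul (by fun_prop) hx1)) (DifferentiableAt.mul (by fun_prop) hx2)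

lemma hl_axis (η : ℝ) : hlK (-(η * Complex.I)) = hlR (-(η * Complex.I)) := by
  have hl : 0 < Real.exp (2 * η) := Real.exp_pos _
  set E : ℂ := Complex.exp η with hE
  have hE0 : E ≠ 0 := Complex.exp_ne_zero _
  have hlE : ((Real.exp (2 * η) : ℝ) : ℂ) = E ^ 2 := by
    rw [hE, ← Complex.exp_nat_mul]; push_cast; rfl
  have e1 : Complex.exp (-(η * Complex.I) * Complex.I) = E := by
    rw [hE]; congr 1
    calc _ = -(η * (Complex.I * Complex.I)) := by ring
      _ = _ := by rw [Complex.I_mul_I]; ring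
  have e1' : Complex.exp (-(-(η * Complex.I) * Complex.I)) = E⁻¹ := by
    rw [Complex.exp_neg, e1]
  have e2 : Complex.exp (2 * -(η * Complex.I) * Complex.I) = E ^ 2 := by
    rw [← e1, ← Complex.exp_nat_mul]; congr 1; push_cast; ring
  have e2' : Complex.exp (-(2 * -(η * Complex.I) * Complex.I)) = (E ^ 2)⁻¹ := by
    rw [Complex.exp_neg, e2]
  have hK : hlK (-(η * Complex.I)) = E * hlC (Real.exp (2 * η)) := by
    rw [hlC_inversion hl, ← integral_const_mul]
    unfold hlK
    congr 1; ext t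
    rw [Complex.cpow_def_of_ne_zero (hl_ofReal_mem hl), ← Complex.ofReal_log hl.le, Real.log_exp,
      ← mul_assoc, hE, ← Complex.exp_add, mul_comm]
    congr 2
    push_cast
    ring
  have hcosh : Real.log (1 + Real.exp (2 * η)) = η + Real.log (2 * Real.cosh η) := by
    have : 1 + Real.exp (2 * η) = Real.exp η * (2 * Real.cosh η) := by
      rw [Real.cosh_eq, show 2 * η = η + η by ring, Real.exp_add, Real.exp_neg]
      have := Real.exp_pos η
      field_simp
      ring
    rw [this, Real.log_mul (Real.exp_pos _).ne' (by have := Real.cosh_pos η; positivity), Real.log_exp]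
  have hcos : Complex.cos (-(η * Complex.I)) = (Real.cosh η : ℂ) := by
    rw [Complex.cos_neg, Complex.cos_mul_I]; push_cast; rfl
  have hlogc : Complex.log (2 * Complex.cos (-(η * Complex.I))) = (Real.log (2 * Real.cosh η) : ℂ) := by
    rw [hcos, Complex.ofReal_log (by have := Real.cosh_pos η; positivity)]
    push_cast; rfl
  have hp0 : 1 + E ^ 2 ≠ 0 := by
    rw [← hlE]; exact_mod_cast (by positivity : 1 + Real.exp (2 * η) ≠ 0)
  rw [hK, hlC_formula hl, hcosh, Real.log_exp]
  unfold hlR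
  rw [hlogc, e1, e1', e2, e2', hlE]
  have c1 : Complex.cos (-(η * Complex.I)) = (E + E⁻¹) / 2 := by
    rw [Complex.cos, e1, neg_mul, e1']
  have c2 : Complex.cos (2 * -(η * Complex.I)) = (E ^ 2 + (E ^ 2)⁻¹) / 2 := by
    rw [Complex.cos, e2, neg_mul, e2']
  have c3 : Complex.sin (-(η * Complex.I)) = (E⁻¹ - E) * Complex.I / 2 := by
    rw [Complex.sin, e1, neg_mul, e1']
  have c4 : 2 * -(η * Complex.I) * ((E⁻¹ - E) * Complex.I / 2) = η * (E⁻¹ - E) := by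
    calc _ = -(Complex.I * Complex.I) * (η * (E⁻¹ - E)) := by ring
      _ = _ := by rw [Complex.I_mul_I]; ring
  have c5 : (E + E⁻¹) / 2 = (1 + E ^ 2) / (2 * E) := by field_simp; ring
  rw [c1, c2, c3, c4, c5, one_div]
  push_cast
  generalize hlX _ = A
  generalize hlX _ = B
  generalize Complex.log (2 * π) = C
  field_simp
  ring

lemma hl_mem_axis (η : ℝ) : -(η * Complex.I) ∈ hlV := by
  have e1 : 2 * -(η * Complex.I) * Complex.I = ((2 * η : ℝ) : ℂ) := by
    calc _ = -(2 * η * (Complex.I * Complex.I)) := by ring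
      _ = _ := by rw [Complex.I_mul_I]; push_cast; ring
  refine ⟨?_, ?_, ?_⟩
  · show |(-(η * Complex.I)).re| < π / 2
    simp; positivity
  · show 0 < (1 + Complex.exp (2 * -(η * Complex.I) * Complex.I)).re
    rw [e1, ← Complex.ofReal_exp, Complex.add_re, Complex.ofReal_re, Complex.one_re]; positivity
  · show 0 < (1 + Complex.exp (-(2 * -(η * Complex.I) * Complex.I))).re
    rw [e1, ← Complex.ofReal_neg, ← Complex.ofReal_exp, Complex.add_re, Complex.ofReal_re, Complex.one_re]; positivity

lemma hl_exp_re (x : ℝ) : (1 + Complex.exp (x * Complex.I)).re = 1 + Real.cos x := by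
  rw [Complex.add_re, Complex.exp_ofReal_mul_I_re, Complex.one_re]

lemma hl_mem_real {x : ℝ} (hx : |x| < π / 2) : (x : ℂ) ∈ hlV := by
  have hc : 0 < Real.cos x := Real.cos_pos_of_mem_Ioo ⟨(abs_lt.mp hx).1, (abs_lt.mp hx).2⟩
  have h2 : 0 < 1 + Real.cos (2 * x) := by rw [Real.cos_two_mul]; nlinarith
  refine ⟨by simpa using hx, ?_, ?_⟩
  · show 0 < (1 + Complex.exp (2 * x * Complex.I)).re
    have := hl_exp_re (2 * x)
    push_cast at this
    rw [this]; exact h2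
  · show 0 < (1 + Complex.exp (-(2 * x * Complex.I))).re
    have := hl_exp_re (-(2 * x))
    push_cast at this
    rw [← neg_mul, this, Real.cos_neg]; exact h2

lemma hl_continuation {x : ℝ} (hx : |x| < π / 2) : hlK x = hlR x := by
  set U : Set ℂ := Complex.ofReal '' Ioo (-(π/2)) (π/2) with hU
  have hUV : U ⊆ hlV := by
    rintro _ ⟨x, hx, rfl⟩
    exact hl_mem_real (abs_lt.mpr hx)
  have hf : AnalyticOnNhd ℂ hlK U :=
    ((hlK_differentiableOn.mono inter_subset_left).analyticOnNhd hlV_open).mono hUV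
  have hg : AnalyticOnNhd ℂ hlR U := (hlR_differentiableOn.analyticOnNhd hlV_open).mono hUV
  have hpre : IsPreconnected U := isPreconnected_Ioo.image _ Complex.continuous_ofReal.continuousOn
  have h0 : (0:ℂ) ∈ U := ⟨0, ⟨by linarith [Real.pi_pos], by linarith [Real.pi_pos]⟩, by simp⟩
  have hseq : Tendsto (fun η : ℝ => -(η * Complex.I)) (nhdsWithin 0 {0}ᶜ) (nhdsWithin 0 {0}ᶜ) := by
    apply tendsto_nhdsWithin_of_tendsto_nhds_of_eventually_within
    · have : ContinuousAt (fun η : ℝ => -(η * Complex.I)) 0 := by fun_prop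
      simpa using this.tendsto.mono_left (nhdsWithin_le_nhds (s := {0}ᶜ))
    · filter_upwards [self_mem_nhdsWithin] with e he
      simpa using he
  have := hf.eqOn_of_preconnected_of_frequently_eq hg hpre h0
    (hseq.frequently (Eventually.frequently (Eventually.of_forall hl_axis)))
  exact this ⟨x, abs_lt.mp hx, rfl⟩

lemma hlX_small {p : ℂ} (hp : 0 < p.re) (h : ‖p‖ ^ 2 = 2 * p.re) : ‖hlX p‖ ≤ 64 * ‖p‖ := by
  have hp0 : 0 < ‖p‖ := hp.trans_le (Complex.re_le_norm p)
  have key : ∀ z : ℝ, 0 < z → ‖hlPhi (p * z) + 1 / 2‖ ≤ ‖p‖ * z * (4 + 4 * z) := by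
    intro z hz
    have hn : ‖p * z‖ = ‖p‖ * z := by simp [abs_of_pos hz]
    have hne : p * z ≠ 0 := by
      rw [← norm_pos_iff, hn]; positivity
    rcases le_total (‖p‖ * z) 1 with h1 | h1
    · have := hlPhi_near hne (by rwa [hn])
      rw [hn] at this
      have h2 : 0 ≤ ‖p‖ * z * z := by positivity
      nlinarith
    · have hre : (p * z).re = p.re * z := by simp
      have h1' : ‖hlB (p * z)‖ ≤ (p.re * z)⁻¹ := by
        rw [← hre]; exact hlB_norm' (by rw [hre]; positivity)
      have h2 : ‖(p * z)⁻¹‖ ≤ (p.re * z)⁻¹ := by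
        rw [norm_inv, hn]; gcongr; exact Complex.re_le_norm p
      have h3 : ‖hlPhi (p * z) + 1 / 2‖ ≤ 2 * (p.re * z)⁻¹ + 1 / 2 := by
        unfold hlPhi
        calc _ ≤ ‖hlB (p * z)‖ + ‖(p * z)⁻¹‖ + ‖(1 / 2 : ℂ)‖ :=
              (norm_add_le _ _).trans (add_le_add (norm_sub_le _ _) le_rfl)
          _ ≤ _ := by
            have h5 : ‖(1 / 2 : ℂ)‖ = 1 / 2 := by norm_num
            rw [h5]; linarith
      refine h3.trans ?_
      have h4 : (p.re * z)⁻¹ ≤ 2 * (‖p‖ * z * z) := by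
        have hr : p.re = ‖p‖ ^ 2 / 2 := by linarith
        rw [hr, inv_le_iff_one_le_mul₀ (by positivity)]
        calc (1:ℝ) ≤ (‖p‖ * z) ^ 3 := one_le_pow₀ h1
          _ = _ := by ring
      nlinarith
  have hb : ∀ z : ℝ, 0 < z → ‖hlXI p z‖ ≤ 16 * ‖p‖ * Real.exp (-(1/4) * z) := by
    intro z hz
    unfold hlXI
    rw [norm_mul]
    have h1 : 4 + 4 * z ≤ 16 * Real.exp (z / 4) := by
      have := Real.add_one_le_exp (z / 4); linarith
    calc _ ≤ ‖hlB z‖ * (‖p‖ * z * (4 + 4 * z)) := by gcongr; exact key z hz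
      _ = (‖hlB z‖ * z) * (‖p‖ * (4 + 4 * z)) := by ring
      _ ≤ Real.exp (-z / 2) * (‖p‖ * (16 * Real.exp (z / 4))) := by
        gcongr; exact hlB_real hz
      _ = 16 * ‖p‖ * (Real.exp (-z / 2) * Real.exp (z / 4)) := by ring
      _ = _ := by rw [← Real.exp_add]; congr 2; ring
  have hi := (integrableOn_exp_mul_Ioi (a := -(1/4)) (by norm_num) 0).const_mul (16 * ‖p‖)
  calc ‖hlX p‖ ≤ ∫ z in Ioi (0:ℝ), 16 * ‖p‖ * Real.exp (-(1/4) * z) := by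
        apply norm_integral_le_of_norm_le hi
        filter_upwards [ae_restrict_mem measurableSet_Ioi] with z hz using hb z hz
    _ = 64 * ‖p‖ := by
      rw [integral_const_mul, integral_exp_mul_Ioi (by norm_num)]
      simp; ring

noncomputable def hlKr (x : ℝ) : ℝ := ∫ t : ℝ, hlW t * Real.exp (2 * x * t)

lemma hlK_real (x : ℝ) : hlK x = (hlKr x : ℂ) := by
  unfold hlK hlKr
  rw [← integral_complex_ofReal]
  congr 1; ext t; push_cast; rfl

lemma hlKr_integrable {x : ℝ} (hx : |x| < π / 2) : Integrable fun t : ℝ => hlW t * Real.exp (2 * x * t) := by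
  have h := (hl_poly_exp_integrable (c := π - 2 * |x|) (by linarith)).const_mul 4
  refine h.mono' ((hlW_continuous.mul (by fun_prop)).aestronglyMeasurable) ?_
  filter_upwards with t
  have := hlK_integrand_bound (a := |x|) (θ := x) (by simp) t
  refine le_trans (le_of_eq ?_) this
  rw [← Complex.norm_real]
  push_cast; rfl

lemma hl_norm_p (x : ℝ) : ‖(1 + Complex.exp (x * Complex.I))‖ ^ 2 = 2 * (1 + Complex.exp (x * Complex.I)).re := by
  rw [← Complex.normSq_eq_norm_sq, Complex.normSq_apply, hl_exp_re, Complex.add_im,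
    Complex.exp_ofReal_mul_I_im, Complex.one_im]
  have := Real.sin_sq_add_cos_sq x
  nlinarith

lemma hl_X_half {x : ℝ} (hx : |x| < π / 2) (y : ℝ) (hy : Real.cos y = Real.cos (2 * x)) :
    ‖hlX (1 + Complex.exp (y * Complex.I))‖ ≤ 128 * Real.cos x := by
  have hc : 0 < Real.cos x := Real.cos_pos_of_mem_Ioo ⟨(abs_lt.mp hx).1, (abs_lt.mp hx).2⟩
  have hre : (1 + Complex.exp (y * Complex.I)).re = 2 * Real.cos x ^ 2 := by
    rw [hl_exp_re, hy, Real.cos_two_mul]; ring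
  have hn := hl_norm_p y
  have h1 := hlX_small (by rw [hre]; positivity) hn
  have h2 : ‖(1 + Complex.exp (y * Complex.I))‖ = 2 * Real.cos x := by
    rw [hre] at hn
    have : ‖(1 + Complex.exp (y * Complex.I))‖ ^ 2 = (2 * Real.cos x) ^ 2 := by rw [hn]; ring
    exact (pow_left_inj₀ (norm_nonneg _) (by positivity) two_ne_zero).mp this
  rw [h2] at h1
  linarith

lemma hlKr_approx {x : ℝ} (hx : |x| < π / 2) :
    |hlKr x - ((eulerMascheroniConstant + Real.cos (2 * x) * Real.log (2 * π) - Real.log (2 * Real.cos x)) / (2 * Real.cos x)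
      + 2 * x * Real.sin x - eulerMascheroniConstant * Real.cos x)| ≤ 256 * Real.cos x := by
  have hc : 0 < Real.cos x := Real.cos_pos_of_mem_Ioo ⟨(abs_lt.mp hx).1, (abs_lt.mp hx).2⟩
  have h := hl_continuation hx
  rw [hlK_real] at h
  unfold hlR at h
  have hlog : Complex.log (2 * Complex.cos x) = (Real.log (2 * Real.cos x) : ℂ) := by
    rw [Complex.ofReal_log (by positivity)]; push_cast; rfl
  rw [hlog] at h
  have h1 := hl_X_half hx (2 * x) rfl
  have h2 := hl_X_half hx (-(2 * x)) (Real.cos_neg _)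
  push_cast at h1 h2
  rw [neg_mul] at h2
  have n1 : ‖Complex.exp (x * Complex.I)‖ = 1 := Complex.norm_exp_ofReal_mul_I x
  have n2 : ‖Complex.exp (-(x * Complex.I))‖ = 1 := by
    have := Complex.norm_exp_ofReal_mul_I (-x)
    push_cast at this
    rwa [neg_mul] at this
  rw [← Real.norm_eq_abs, ← Complex.norm_real]
  have e : ((hlKr x - ((eulerMascheroniConstant + Real.cos (2 * x) * Real.log (2 * π) - Real.log (2 * Real.cos x)) / (2 * Real.cos x)
      + 2 * x * Real.sin x - eulerMascheroniConstant * Real.cos x) : ℝ) : ℂ) =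
      Complex.exp (x * Complex.I) * hlX (1 + Complex.exp (2 * x * Complex.I))
      + Complex.exp (-(x * Complex.I)) * hlX (1 + Complex.exp (-(2 * x * Complex.I))) := by
    push_cast at h ⊢
    rw [h]; ring
  rw [e]
  refine (norm_add_le _ _).trans ?_
  rw [norm_mul, norm_mul, n1, n2]
  linarith

lemma hl_log_two_pi : 0 ≤ Real.log (2 * π) ∧ Real.log (2 * π) ≤ 2 := by
  have h3 := Real.pi_gt_three
  constructor
  · exact Real.log_nonneg (by linarith)
  · rw [Real.log_le_iff_le_exp (by positivity)]
    have h1 := Real.exp_one_gt_d9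
    have h2 := Real.pi_lt_d2
    have : Real.exp 2 = Real.exp 1 * Real.exp 1 := by rw [← Real.exp_add]; norm_num
    rw [this]
    nlinarith

set_option maxHeartbeats 800000 in
lemma hl_main {d : ℝ} (hd : 0 < d) (hd1 : d ≤ 1 / 3) :
    |hlKr (π / 2 - d) - ((eulerMascheroniConstant - Real.log (2 * π) - Real.log (2 * d)) / (2 * d) + π)|
      ≤ 300 * (d * (-Real.log d)) := by
  have hpi := Real.pi_gt_three
  have hpi4 := Real.pi_lt_four
  have hx : |π / 2 - d| < π / 2 := by rw [abs_lt]; constructor <;> linarith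
  have h := hlKr_approx hx
  rw [Real.cos_pi_div_two_sub, Real.sin_pi_div_two_sub,
    show 2 * (π / 2 - d) = π - 2 * d by ring, Real.cos_pi_sub, Real.cos_two_mul'] at h
  have hs1 : Real.sin d ≤ d := (Real.sin_lt hd).le
  have hs2 : d - d ^ 3 / 6 ≤ Real.sin d := (Real.sin_gt_sub_cube hd).le
  have hc1 := Real.cos_le_one d
  have hc2 := Real.one_sub_sq_div_two_le_cos (x := d)
  have hsc := Real.sin_sq_add_cos_sq d
  obtain ⟨hL0, hL2⟩ := hl_log_two_pi
  have hg1 := Real.eulerMascheroniConstant_lt_two_thirds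
  have hg0 := Real.one_half_lt_eulerMascheroniConstant
  set s := Real.sin d
  set c := Real.cos d
  set L := Real.log (2 * π)
  set γ := eulerMascheroniConstant
  have hs3 : 3 / 4 * d ≤ s := by nlinarith [pow_pos hd 3, pow_pos hd 2]
  have hs : 0 < s := by linarith
  have hD : 1 ≤ -Real.log d := by
    rw [← Real.log_inv, Real.le_log_iff_exp_le (by positivity)]
    have : 3 ≤ d⁻¹ := by rw [le_inv_comm₀ (by norm_num) hd]; linarith
    linarith [Real.exp_one_lt_three]
  set D := -Real.log d with hDdef
  have hlog2d : Real.log (2 * d) = Real.log 2 - D := by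
    rw [Real.log_mul (by norm_num) hd.ne']; ring
  have hl2 := Real.log_two_lt_d9
  have hl2' := Real.log_two_gt_d9
  -- the two main terms
  have hlogdiff : 0 ≤ Real.log (2 * d) - Real.log (2 * s) ∧ Real.log (2 * d) - Real.log (2 * s) ≤ (d - s) / s := by
    rw [← Real.log_div (by positivity) (by positivity), show 2 * d / (2 * s) = d / s by field_simp]
    constructor
    · exact Real.log_nonneg (by rw [le_div_iff₀ hs]; linarith)
    · have := Real.log_le_sub_one_of_pos (div_pos hd hs)
      have e : (d - s) / s = d / s - 1 := by field_simp
      rw [e]; exact this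
  set A' := γ - L - Real.log (2 * d) with hA'
  set u := Real.log (2 * d) - Real.log (2 * s) with hu
  have hA'b : |A'| ≤ 5 * D := by
    rw [hA', hlog2d, abs_le]; constructor <;> linarith
  have hds : d - s ≤ d ^ 3 / 6 := by linarith
  have hdiv : (d - s) / s ≤ d ^ 2 := by
    rw [div_le_iff₀ hs]; nlinarith [pow_pos hd 3, pow_pos hd 2]
  have t1 : |u / (2 * s)| ≤ d := by
    rw [abs_of_nonneg (div_nonneg hlogdiff.1 (by positivity)), div_le_iff₀ (by positivity)]
    nlinarith
  have t2 : |A' * ((d - s) / (2 * s * d))| ≤ 5 * D * d := by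
    have h0 : 0 ≤ (d - s) / (2 * s * d) := div_nonneg (by linarith) (by positivity)
    have h1 : (d - s) / (2 * s * d) ≤ d := by
      rw [div_le_iff₀ (by positivity)]; nlinarith [pow_pos hd 3, pow_pos hd 2]
    rw [abs_mul, abs_of_nonneg h0]
    gcongr
  have t3 : |(π - 2 * d) * c - π| ≤ 6 * d := by
    rw [abs_le]; constructor <;> nlinarith
  have e : (γ + -(c ^ 2 - s ^ 2) * L - Real.log (2 * s)) / (2 * s) + (π - 2 * d) * c - γ * s
      - (A' / (2 * d) + π) = u / (2 * s) + A' * ((d - s) / (2 * s * d)) + L * s + ((π - 2 * d) * c - π) - γ * s := by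
    have hc' : c ^ 2 = 1 - s ^ 2 := by linarith
    rw [hc', hA', hu]
    field_simp
    ring
  have t4 : |L * s| ≤ 2 * d := by
    rw [abs_of_nonneg (by positivity)]; nlinarith
  have t5 : |γ * s| ≤ d := by
    rw [abs_of_nonneg (mul_nonneg (by linarith) hs.le)]; nlinarith
  have hDd : d ≤ d * D := by nlinarith
  obtain ⟨a0, b0⟩ := abs_le.mp h
  obtain ⟨a1, b1⟩ := abs_le.mp t1
  obtain ⟨a2, b2⟩ := abs_le.mp t2
  obtain ⟨a3, b3⟩ := abs_le.mp t3
  obtain ⟨a4, b4⟩ := abs_le.mp t4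
  obtain ⟨a5, b5⟩ := abs_le.mp t5
  have hcm : 5 * D * d = 5 * (d * D) := by ring
  rw [hcm] at a2 b2
  clear t1 t2 t3 t4 t5 h hlogdiff hdiv hcm
  rw [abs_le]
  constructor
  · linarith only [a0, b0, a1, b1, a2, b2, a3, b3, a4, b4, a5, b5, hDd, e, hs1, hd]
  · linarith only [a0, b0, a1, b1, a2, b2, a3, b3, a4, b4, a5, b5, hDd, e, hs1, hd]

noncomputable def hlI (d : ℝ) : ℝ := ∫ t in Ioi (0:ℝ), Z2 t * Real.exp (-2 * d * t)

lemma hlI_integrable {d : ℝ} (hd : 0 < d) : IntegrableOn (fun t => Z2 t * Real.exp (-2 * d * t)) (Ioi 0) := by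
  have h := ((hl_poly_exp_integrable (c := 2 * d) (by linarith)).const_mul 4).integrableOn (s := Ioi 0)
  refine Integrable.mono' h ((Z2_continuous.mul (by fun_prop)).aestronglyMeasurable) ?_
  filter_upwards [ae_restrict_mem measurableSet_Ioi] with t ht
  have ht : 0 < t := ht
  rw [Real.norm_eq_abs, abs_of_nonneg (mul_nonneg (Z2_nonneg t) (Real.exp_pos _).le), abs_of_pos ht]
  have := Z2_bound t
  rw [abs_of_pos ht] at this
  calc _ ≤ 4 * (1 + t) ^ 2 * Real.exp (-2 * d * t) := by gcongr
    _ = _ := by rw [show -2 * d * t = -(2 * d) * t by ring]; ring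

lemma hlKr_eq {x : ℝ} (hx : |x| < π / 2) :
    IntegrableOn (fun t => hlW t * (Real.exp (2 * x * t) + Real.exp (-(2 * x * t)))) (Ioi 0) ∧
    hlKr x = ∫ t in Ioi (0:ℝ), hlW t * (Real.exp (2 * x * t) + Real.exp (-(2 * x * t))) := by
  have hi := hlKr_integrable hx
  have hWe : ∀ t, hlW (-t) = hlW t := by
    intro t; unfold hlW; rw [Z2_even, mul_neg, Real.cosh_neg]
  have hn := hi.comp_neg
  have e : ∀ t : ℝ, hlW (-t) * Real.exp (2 * x * -t) = hlW t * Real.exp (-(2 * x * t)) := by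
    intro t; rw [hWe, mul_neg]
  simp only [e] at hn
  have hadd : Integrable fun t => hlW t * (Real.exp (2 * x * t) + Real.exp (-(2 * x * t))) := by
    simp only [mul_add]
    exact hi.add hn
  refine ⟨hadd.integrableOn, ?_⟩
  have h1 : ∫ t, hlW t * (Real.exp (2 * x * t) + Real.exp (-(2 * x * t))) = 2 * hlKr x := by
    simp only [mul_add]
    rw [integral_add hi hn]
    have := integral_neg_eq_self (fun t => hlW t * Real.exp (2 * x * t)) volume
    simp only [e] at this
    rw [this]
    unfold hlKr; ring
  have h2 := integral_comp_abs (f := fun t => hlW t * (Real.exp (2 * x * t) + Real.exp (-(2 * x * t))))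
  have h3 : ∀ t : ℝ, hlW |t| * (Real.exp (2 * x * |t|) + Real.exp (-(2 * x * |t|))) =
      hlW t * (Real.exp (2 * x * t) + Real.exp (-(2 * x * t))) := by
    intro t
    rcases abs_choice t with h | h
    · rw [h]
    · rw [h, hWe, mul_neg, neg_neg, add_comm]
  simp only [h3] at h2
  linarith

lemma hl_diff {d t : ℝ} (hd : 0 < d) (hd1 : d ≤ 1 / 3) (ht : 0 < t) :
    |hlW t * (Real.exp (2 * (π / 2 - d) * t) + Real.exp (-(2 * (π / 2 - d) * t))) - Z2 t * Real.exp (-2 * d * t)|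
      ≤ 32 * d * ((1 + |t|) ^ 2 * Real.exp (-3 * |t|)) := by
  set P := Real.exp (π * t) with hP
  set Q := Real.exp (2 * d * t) with hQ
  have hP0 : 0 < P := Real.exp_pos _
  have hQ0 : 0 < Q := Real.exp_pos _
  have e1 : Real.exp (2 * (π / 2 - d) * t) = P / Q := by
    rw [hP, hQ, ← Real.exp_sub]; congr 1; ring
  have e2 : Real.exp (-(2 * (π / 2 - d) * t)) = Q / P := by
    rw [hP, hQ, ← Real.exp_sub]; congr 1; ring
  have e3 : Real.exp (-2 * d * t) = Q⁻¹ := by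
    rw [hQ, ← Real.exp_neg]; congr 1; ring
  have e4 : hlW t = Z2 t / (P + P⁻¹) := by
    unfold hlW; rw [Real.cosh_eq, Real.exp_neg]; congr 1; ring
  have e5 : hlW t * (P / Q + Q / P) - Z2 t * Q⁻¹ = Z2 t * ((Q - Q⁻¹) / (P ^ 2 + 1)) := by
    rw [e4]; field_simp; ring
  rw [e1, e2, e3, e5]
  have hQ1 : 1 ≤ Q := Real.one_le_exp (by positivity)
  have hQinv : Q⁻¹ ≤ 1 := inv_le_one_of_one_le₀ hQ1
  have hQb : Q - Q⁻¹ ≤ 4 * d * t * Q := by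
    have h1 := Real.add_one_le_exp (-(4 * d * t))
    have h2 : Q⁻¹ = Q * Real.exp (-(4 * d * t)) := by
      rw [hQ, ← Real.exp_neg, ← Real.exp_add]; congr 1; ring
    rw [h2]; nlinarith
  have hfr : (Q - Q⁻¹) / (P ^ 2 + 1) ≤ 4 * d * t * Q * (P ^ 2)⁻¹ := by
    rw [div_eq_mul_inv]
    have : (P ^ 2 + 1)⁻¹ ≤ (P ^ 2)⁻¹ := inv_anti₀ (by positivity) (by linarith)
    gcongr
  have hfr0 : 0 ≤ (Q - Q⁻¹) / (P ^ 2 + 1) := div_nonneg (by linarith) (by positivity)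
  rw [abs_of_nonneg (mul_nonneg (Z2_nonneg t) hfr0)]
  have hZ := Z2_bound t
  have hexp : t * (Q * (P ^ 2)⁻¹) ≤ Real.exp (-3 * |t|) := by
    have h1 : t ≤ Real.exp t := by linarith [Real.add_one_le_exp t]
    have h2 : Q * (P ^ 2)⁻¹ = Real.exp (2 * d * t - 2 * π * t) := by
      rw [Real.exp_sub, div_eq_mul_inv, hP, ← Real.exp_nat_mul]; congr 3; push_cast; ring
    rw [h2, abs_of_pos ht]
    calc _ ≤ Real.exp t * Real.exp (2 * d * t - 2 * π * t) := by gcongr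
      _ = Real.exp (t + (2 * d * t - 2 * π * t)) := by rw [Real.exp_add]
      _ ≤ _ := by
        apply Real.exp_le_exp.mpr
        nlinarith [Real.pi_gt_three]
  calc _ ≤ (4 * (1 + |t|) ^ 2) * (4 * d * t * Q * (P ^ 2)⁻¹) := by gcongr
    _ = 16 * d * (1 + |t|) ^ 2 * (t * (Q * (P ^ 2)⁻¹)) := by ring
    _ ≤ 16 * d * (1 + |t|) ^ 2 * Real.exp (-3 * |t|) := by gcongr
    _ ≤ _ := by
      have : 0 ≤ d * ((1 + |t|) ^ 2 * Real.exp (-3 * |t|)) := by positivity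
      nlinarith

lemma hl_K_sub_I : ∃ C : ℝ, 0 ≤ C ∧ ∀ d : ℝ, 0 < d → d ≤ 1 / 3 → |hlKr (π / 2 - d) - hlI d| ≤ C * d := by
  have hi := hl_poly_exp_integrable (c := 3) (by norm_num)
  refine ⟨32 * ∫ t in Ioi (0:ℝ), (1 + |t|) ^ 2 * Real.exp (-3 * |t|), ?_, ?_⟩
  · exact mul_nonneg (by norm_num) (integral_nonneg fun t => by positivity)
  · intro d hd hd1
    have hpi := Real.pi_gt_three
    have hx : |π / 2 - d| < π / 2 := by rw [abs_lt]; constructor <;> linarith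
    obtain ⟨h1, h2⟩ := hlKr_eq hx
    unfold hlI
    rw [h2, ← integral_sub h1 (hlI_integrable hd)]
    have := norm_integral_le_of_norm_le (μ := volume.restrict (Ioi (0:ℝ)))
      (f := fun t => hlW t * (Real.exp (2 * (π / 2 - d) * t) + Real.exp (-(2 * (π / 2 - d) * t))) - Z2 t * Real.exp (-2 * d * t))
      (hi.integrableOn (s := Ioi 0) |>.const_mul (32 * d)) ?_
    · rw [Real.norm_eq_abs, integral_const_mul] at this
      linarith
    · filter_upwards [ae_restrict_mem measurableSet_Ioi] with t ht using hl_diff hd hd1 ht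

lemma hl_tail {y m : ℝ} (hy : 3 ≤ y) (hm : 7 * y * Real.log y ≤ m) :
    0 ≤ (∫ t in Ioi m, Z2 t * Real.exp (-2 * (1 / y) * t)) ∧
    (∫ t in Ioi m, Z2 t * Real.exp (-2 * (1 / y) * t)) ≤ 288 * π * (1 / y) := by
  have hy0 : 0 < y := by linarith
  have hlog : 0 < Real.log y := Real.log_pos (by linarith)
  have hm0 : 0 < m := lt_of_lt_of_le (by positivity) hm
  refine ⟨integral_nonneg fun t => mul_nonneg (Z2_nonneg t) (Real.exp_pos _).le, ?_⟩
  have hi : Integrable fun t : ℝ => 288 * (1 / y ^ 3) * (1 + t ^ 2)⁻¹ := integrable_inv_one_add_sq.const_mul _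
  have hintg : IntegrableOn (fun t => Z2 t * Real.exp (-2 * (1 / y) * t)) (Ioi m) :=
    (hlI_integrable (d := 1 / y) (by positivity)).mono_set (Ioi_subset_Ioi hm0.le)
  have hpt : ∀ t ∈ Ioi m, Z2 t * Real.exp (-2 * (1 / y) * t) ≤ 288 * (1 / y ^ 3) * (1 + t ^ 2)⁻¹ := by
    intro t ht
    have ht : m < t := ht
    have ht0 : 0 < t := hm0.trans ht
    have hZ := Z2_bound t
    rw [abs_of_pos ht0] at hZ
    have h1 := hl_poly_exp (c := 1 / y) (by positivity) ht0.le
    have h2 : Real.exp (-(1 / y) * t) ≤ 1 / y ^ 7 := by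
      have : 1 / y ^ 7 = Real.exp (-(7 * Real.log y)) := by
        rw [Real.exp_neg, mul_comm, Real.exp_mul, Real.exp_log hy0, one_div]
        norm_cast
      rw [this]
      apply Real.exp_le_exp.mpr
      have : 7 * Real.log y ≤ t / y := by rw [le_div_iff₀ hy0]; linarith
      have e : -(1 / y) * t = -(t / y) := by ring
      rw [e]; linarith
    have h3 : Real.exp (1 / y) ≤ 3 := by
      refine le_trans (Real.exp_le_exp.mpr ?_) Real.exp_one_lt_three.le
      rw [div_le_one hy0]; linarith
    calc _ ≤ 4 * (1 + t) ^ 2 * Real.exp (-2 * (1 / y) * t) := by gcongr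
      _ = 4 * ((1 + t) ^ 2 * Real.exp (-(1 / y) * t)) * Real.exp (-(1 / y) * t) := by
        rw [show -2 * (1 / y) * t = -(1 / y) * t + -(1 / y) * t by ring, Real.exp_add]; ring
      _ ≤ 4 * (24 * Real.exp (1 / y) / (1 / y) ^ 4 * (1 + t ^ 2)⁻¹) * (1 / y ^ 7) := by gcongr
      _ ≤ 4 * (24 * 3 / (1 / y) ^ 4 * (1 + t ^ 2)⁻¹) * (1 / y ^ 7) := by gcongr
      _ = _ := by field_simp; norm_num
  calc _ ≤ ∫ t in Ioi m, 288 * (1 / y ^ 3) * (1 + t ^ 2)⁻¹ :=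
        setIntegral_mono_on hintg hi.integrableOn measurableSet_Ioi hpt
    _ ≤ ∫ t, 288 * (1 / y ^ 3) * (1 + t ^ 2)⁻¹ :=
        setIntegral_le_integral hi (Eventually.of_forall fun t => by positivity)
    _ = 288 * (1 / y ^ 3) * π := by rw [integral_const_mul, integral_univ_inv_one_add_sq]
    _ ≤ 288 * (1 / y) * π := by
      gcongr
      exact le_self_pow₀ (by linarith) (by norm_num)
    _ = _ := by ring

/-- (Lemma 2)  There exist constants `c₀ ∈ ℝ` and `C > 0` (absolute, not depending on `μ`) such
that for every `μ` in the admissible class with associated function `M = M_μ`, for all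
sufficiently large `y`:
`|∫₀^{M(y)} |ζ(1/2+it)|² dt − F(y)| ≤ C (ln y)/y`, where
`F(y) = (y/2) ln(y/2) + (c − ln 2π)(y/2) + c₀` and `c` is the Euler–Mascheroni constant. -/
theorem lemma2_hardy_littlewood_M :
    ∃ c₀ C : ℝ, 0 < C ∧
      ∀ (y₀ : ℝ) (μ M : ℝ → ℝ),
        ContDiffOn ℝ (⊤ : ℕ∞) μ (Set.Ici y₀) →
        StrictMonoOn μ (Set.Ici y₀) →
        Tendsto μ atTop atTop →
        (∀ y ∈ Set.Ici y₀, 0 < μ y) →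
        (∀ y ∈ Set.Ici y₀, 7 * y * Real.log y ≤ μ y) →
        (∀ y ∈ Set.Ici y₀, 0 < M y) →
        (∀ y ∈ Set.Ici y₀,
          (∫ t in (0:ℝ)..μ y, Z2 t * Real.exp (-2 * t / y)) = ∫ t in (0:ℝ)..M y, Z2 t) →
        ∀ᶠ y in atTop,
          |(∫ t in (0:ℝ)..M y, Z2 t)
              - ((y/2) * Real.log (y/2)
                 + (Real.eulerMascheroniConstant - Real.log (2*Real.pi)) * (y/2) + c₀)|
            ≤ C * Real.log y / y := by
  obtain ⟨C, hC0, hC⟩ := hl_K_sub_I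
  refine ⟨π, 300 + C + 288 * π, by positivity, ?_⟩
  intro y₀ μ M _ _ _ hμ0 hμ _ hM
  filter_upwards [eventually_ge_atTop y₀, eventually_ge_atTop 3] with y hy hy3
  have hy0 : 0 < y := by linarith
  have hlog : 1 ≤ Real.log y := by
    rw [Real.le_log_iff_exp_le hy0]; linarith [Real.exp_one_lt_three]
  have hd : 0 < 1 / y := by positivity
  have hd1 : 1 / y ≤ 1 / 3 := one_div_le_one_div_of_le (by norm_num) hy3
  have h1 := hl_main hd hd1
  have h2 := hC _ hd hd1
  obtain ⟨h3, h4⟩ := hl_tail hy3 (hμ y hy)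
  have hI := hlI_integrable hd
  have h5 := intervalIntegral.integral_interval_add_Ioi hI (hI.mono_set (Ioi_subset_Ioi (hμ0 y hy).le))
  rw [← hM y hy]
  have e : (fun t => Z2 t * Real.exp (-2 * t / y)) = fun t => Z2 t * Real.exp (-2 * (1 / y) * t) := by
    ext t; congr 2; ring
  rw [e]
  change _ = hlI (1 / y) at h5
  have hl1 : Real.log (1 / y) = -Real.log y := by rw [one_div, Real.log_inv]
  have hl2 : Real.log (2 * (1 / y)) = -Real.log (y / 2) := by
    rw [← Real.log_inv]; congr 1; field_simp
  rw [hl1, hl2, neg_neg] at h1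
  have e2 : (eulerMascheroniConstant - Real.log (2 * π) - -Real.log (y / 2)) / (2 * (1 / y)) + π
      = (y/2) * Real.log (y/2) + (Real.eulerMascheroniConstant - Real.log (2*Real.pi)) * (y/2) + π := by
    field_simp; ring
  rw [e2] at h1
  have e3 : (300 + C + 288 * π) * Real.log y / y = 300 * (1 / y * Real.log y) + C * (1 / y * Real.log y)
      + 288 * π * (1 / y * Real.log y) := by ring
  rw [e3]
  have h6 : 1 / y ≤ 1 / y * Real.log y := le_mul_of_one_le_right hd.le hlog
  have h7 : C * (1 / y) ≤ C * (1 / y * Real.log y) := by gcongr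
  have h8 : 288 * π * (1 / y) ≤ 288 * π * (1 / y * Real.log y) := by gcongr
  rw [abs_le] at *
  constructor <;> linarith [h1.1, h1.2, h2.1, h2.2]
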